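/- arXiv:2111.14962 — 5 statements merged into one kernel-verified Lean document; each statement's English description precedes it below -/
import Mathlib

section
/- Let ℓ ≥ 1 and let Λ be a symmetric ℓ×ℓ integer matrix with columns Λ₁,…,Λ_ℓ. Suppose given, for each ε ∈ {0,1}^ℓ and each s ∈ ℤ^ℓ, an 𝔽₂-vector space C_ε(s), and for each pair ε ≤ ε′ (coordinatewise) and each function o from {i : ε_i < ε′_i} to {+,−}, an 𝔽₂-linear map Φ^{ε,ε′,o} : C_ε(s) → C_{ε′}(s + Σ_{i : o(i)=−} Λ_i) for every s (for ε = ε′ only the empty function o occurs, giving a map preserving s). Let C = ∏_{ε,s} C_ε(s) and let D : C → C be the sum of all the maps Φ^{ε,ε′,o}. For a = (a₁,…,a_ℓ) ∈ ℤ^ℓ define the 𝔽₂-linear endomorphism 𝔄_a = Σ_{i=1}^ℓ a_i · F^{K_i} (coefficients reduced mod 2), where F^{K_i} is the sum of all maps Φ^{ε,ε′,o} with o(i) = +. If there exist a positive integer N and x ∈ ℤ^ℓ with N·a = Λx, then there exists an 𝔽₂-linear map H : C → C with H(C_ε(s)) ⊆ C_ε(s) for all ε and s, such that 𝔄_a =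 D∘H + H∘D. -/
open scoped Classical

namespace LinkSurgeryHomologyAction

variable (ℓ : ℕ) (Λ : Matrix (Fin ℓ) (Fin ℓ) ℤ)
variable (C : (Fin ℓ → Bool) → (Fin ℓ → ℤ) → Type)
variable [∀ ε s, AddCommGroup (C ε s)] [∀ ε s, Module (ZMod 2) (C ε s)]

/-- The Alexander-grading shift `Σ_{i : o i = −} Λ_i` associated to an orientation `o`
of the components where `ε` and `ε'` differ (`o i = true` means `+`). -/
noncomputable def shiftV {ε ε' : Fin ℓ → Bool} (o : {i : Fin ℓ // ε i ≠ ε' i} → Bool) :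
    Fin ℓ → ℤ :=
  ∑ i : {i : Fin ℓ // ε i ≠ ε' i}, if o i then 0 else (fun j => Λ j i.1)

/-- The total complex `C = ∏_{ε,s} C_ε(s)`. -/
abbrev Tot : Type :=
  ∀ p : (Fin ℓ → Bool) × (Fin ℓ → ℤ), C p.1 p.2

/-- Transport along an equality of Alexander gradings. -/
def castC {ε : Fin ℓ → Bool} {s s' : Fin ℓ → ℤ} (h : s = s') :
    C ε s →ₗ[ZMod 2] C ε s' := by subst h; exact LinearMap.id

/-- The contribution of the map `Φ^{ε,ε',o}` to the component of the total complex at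
`(ε', s')`, namely `Φ^{ε,ε',o}` applied to the `(ε, s' − shift)` component. -/
noncomputable def piece
    (Φ : ∀ ε ε' : Fin ℓ → Bool, ε ≤ ε' → ∀ (o : {i : Fin ℓ // ε i ≠ ε' i} → Bool)
      (s : Fin ℓ → ℤ), C ε s →ₗ[ZMod 2] C ε' (s + shiftV ℓ Λ o))
    (ε : Fin ℓ → Bool) (p : (Fin ℓ → Bool) × (Fin ℓ → ℤ)) (hle : ε ≤ p.1)
    (o : {i : Fin ℓ // ε i ≠ p.1 i} → Bool) :
    Tot ℓ C →ₗ[ZMod 2] C p.1 p.2 :=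
  (castC ℓ C (by abel)) ∘ₗ (Φ ε p.1 hle o (p.2 - shiftV ℓ Λ o)) ∘ₗ
    (LinearMap.proj (ε, p.2 - shiftV ℓ Λ o))

/-- The total differential `D`: the sum of all the maps `Φ^{ε,ε',o}`. -/
noncomputable def Dtot
    (Φ : ∀ ε ε' : Fin ℓ → Bool, ε ≤ ε' → ∀ (o : {i : Fin ℓ // ε i ≠ ε' i} → Bool)
      (s : Fin ℓ → ℤ), C ε s →ₗ[ZMod 2] C ε' (s + shiftV ℓ Λ o)) :
    Tot ℓ C →ₗ[ZMod 2] Tot ℓ C :=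
  LinearMap.pi fun p =>
    ∑ ε : Fin ℓ → Bool,
      if hle : ε ≤ p.1 then
        ∑ o : {i : Fin ℓ // ε i ≠ p.1 i} → Bool, piece ℓ Λ C Φ ε p hle o
      else 0

/-- The map `F^{K_i}`: the sum of all the maps `Φ^{ε,ε',o}` with `o i = +`. -/
noncomputable def Fpos
    (Φ : ∀ ε ε' : Fin ℓ → Bool, ε ≤ ε' → ∀ (o : {i : Fin ℓ // ε i ≠ ε' i} → Bool)
      (s : Fin ℓ → ℤ), C ε s →ₗ[ZMod 2] C ε' (s + shiftV ℓ Λ o))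
    (i : Fin ℓ) :
    Tot ℓ C →ₗ[ZMod 2] Tot ℓ C :=
  LinearMap.pi fun p =>
    ∑ ε : Fin ℓ → Bool,
      if hle : ε ≤ p.1 then
        ∑ o : {i : Fin ℓ // ε i ≠ p.1 i} → Bool,
          if hd : ε i ≠ p.1 i then
            (if o ⟨i, hd⟩ then piece ℓ Λ C Φ ε p hle o else 0)
          else 0
      else 0

/-- The action `𝔄_a = Σᵢ aᵢ · F^{K_i}` (coefficients reduced mod 2). -/
noncomputable def Atot
    (Φ : ∀ ε ε' : Fin ℓ → Bool, ε ≤ ε' → ∀ (o : {i : Fin ℓ // ε i ≠ ε' i} → Bool)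
      (s : Fin ℓ → ℤ), C ε s →ₗ[ZMod 2] C ε' (s + shiftV ℓ Λ o))
    (a : Fin ℓ → ℤ) :
    Tot ℓ C →ₗ[ZMod 2] Tot ℓ C :=
  ∑ i : Fin ℓ, ((a i : ZMod 2)) • Fpos ℓ Λ C Φ i

/-!
For `H` multiplication by a function `g ε s`, the operator `D ∘ H + H ∘ D` is the sum of the maps
`Φ^{ε,ε',o}` with coefficients `g ε' (s + shift o) - g ε s` (signs do not matter mod 2), while in
`𝔄_a` the coefficient is `Σ_{o i = +} a_i`. The latter is a coboundary: `Σ_{ε i = 1} a_i` grows by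
the sum of `a_i` over all components that change, and if `h (s + Λ_i) = h s + a_i` then `h` grows
by the sum over the negative ones, so the difference of the two can be taken as `g`. When
`N • a = x Λ`, such an `h` is `s ↦ ⌊(x ⬝ s) / N⌋`.
-/

theorem sum_dite_zero {ι M : Type*} [Fintype ι] [AddCommMonoid M] {P : ι → Prop}
    [DecidablePred P] (f : ∀ i, P i → M) :
    ∑ i, (if h : P i then f i h else 0) = ∑ i : {i // P i}, f i i.2 := by
  rw [← Fintype.sum_subtype_add_sum_subtype P, Fintype.sum_congr _ _ fun i => dif_pos i.2,
    Fintype.sum_congr _ _ fun i : {i // ¬P i} => dif_neg i.2, Finset.sum_const_zero, add_zero]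

section Weights

variable {ℓ} {Λ} {M : Type*}

/-- The signs of the components along which the hypercube vertices `ε` and `ε'` differ, with `true`
for `+`. -/
abbrev Orientation (ε ε' : Fin ℓ → Bool) : Type :=
  {i : Fin ℓ // ε i ≠ ε' i} → Bool

/-- The sum `Σ_{o i = +} b_i`; for `b = a` mod 2 it is the coefficient of `Φ^{ε,ε',o}` in `𝔄_a`. -/
def positiveWeight [AddCommMonoid M] (b : Fin ℓ → M) {ε ε' : Fin ℓ → Bool}
    (o : Orientation ε ε') : M :=
  ∑ i, if o i then b i else 0

theorem positiveWeight_single [AddCommMonoidWithOne M] (i : Fin ℓ) {ε ε' : Fin ℓ → Bool}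
    (o : Orientation ε ε') :
    positiveWeight (Pi.single i (1 : M)) o =
      if hi : ε i ≠ ε' i then if o ⟨i, hi⟩ then 1 else 0 else 0 := by
  rw [positiveWeight,
    ← sum_dite_zero fun j hj => if o ⟨j, hj⟩ then (Pi.single i 1 : Fin ℓ → M) j else 0,
    Fintype.sum_eq_single i fun j hj => by simp [hj], Pi.single_eq_same]

theorem sum_mul_positiveWeight_single [NonAssocSemiring M] (b : Fin ℓ → M) {ε ε' : Fin ℓ → Bool}
    (o : Orientation ε ε') :
    ∑ i, b i * positiveWeight (Pi.single i 1) o = positiveWeight b o := by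
  simp only [positiveWeight, Finset.mul_sum]
  rw [Finset.sum_comm]
  simp [Pi.single_apply]

/-- The sum `Σ_{ε i = 1} b_i`, which changes from `ε` to `ε'` by the sum of `b` over the
components of both signs. -/
def vertexWeight [AddCommMonoid M] (b : Fin ℓ → M) (ε : Fin ℓ → Bool) : M :=
  ∑ i, if ε i then b i else 0

theorem vertexWeight_add_sum_ne [AddCommMonoid M] (b : Fin ℓ → M) {ε ε' : Fin ℓ → Bool}
    (hle : ε ≤ ε') :
    vertexWeight b ε + ∑ i : {i // ε i ≠ ε' i}, b i = vertexWeight b ε' := by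
  have h_sum : ∑ i : {i // ε i ≠ ε' i}, b i = ∑ i, if ε i ≠ ε' i then b i else 0 :=
    (sum_dite_zero fun i _ => b i).symm
  rw [h_sum, vertexWeight, vertexWeight, ← Finset.sum_add_distrib]
  refine Finset.sum_congr rfl fun i _ => ?_
  have hi : ε i → ε' i := hle i
  cases hε : ε i <;> cases hε' : ε' i <;> simp_all

theorem map_add_sum_of_map_add {ι G : Type*} [AddCommMonoid G] [AddCommMonoid M]
    {h : G → M} {u : ι → G} {b : ι → M} (hh : ∀ s i, h (s + u i) = h s + b i)
    (t : Finset ι) (s : G) :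
    h (s + ∑ i ∈ t, u i) = h s + ∑ i ∈ t, b i := by
  induction t using Finset.induction_on generalizing s with
  | empty => simp
  | insert i t hi ih =>
    rw [Finset.sum_insert hi, Finset.sum_insert hi, ← add_assoc, ih, hh, add_assoc]

theorem map_add_shiftV_add_positiveWeight [AddCommMonoid M] {h : (Fin ℓ → ℤ) → M} {b : Fin ℓ → M}
    (hh : ∀ s i, h (s + Λ.col i) = h s + b i) {ε ε' : Fin ℓ → Bool} (o : Orientation ε ε')
    (s : Fin ℓ → ℤ) :
    h (s + shiftV ℓ Λ o) + positiveWeight b o = h s + ∑ i : {i // ε i ≠ ε' i}, b i := by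
  have h_shift : h (s + shiftV ℓ Λ o) = h s + ∑ i, if o i then 0 else b i := by
    refine map_add_sum_of_map_add (fun s i => ?_) Finset.univ s
    split_ifs
    · simp
    · exact hh s i
  rw [h_shift, positiveWeight, add_assoc, ← Finset.sum_add_distrib]
  congr! 2 with i
  split_ifs <;> simp

theorem vertexWeight_sub_map_coboundary [AddCommGroup M] {h : (Fin ℓ → ℤ) → M} {b : Fin ℓ → M}
    (hh : ∀ s i, h (s + Λ.col i) = h s + b i) {ε ε' : Fin ℓ → Bool} (hle : ε ≤ ε')
    (o : Orientation ε ε') (s : Fin ℓ → ℤ) :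
    (vertexWeight b ε' - h (s + shiftV ℓ Λ o)) - (vertexWeight b ε - h s) =
      positiveWeight b o := by
  rw [← vertexWeight_add_sum_ne b hle,
    eq_sub_of_add_eq' (map_add_shiftV_add_positiveWeight hh o s)]
  abel

theorem dotProduct_ediv_add_col {m n : Type*} [Fintype m] {A : Matrix m n ℤ} {a : n → ℤ} {x : m → ℤ}
    {N : ℤ} (hN : N ≠ 0) (hNa : N • a = Matrix.vecMul x A) (s : m → ℤ) (i : n) :
    (x ⬝ᵥ (s + A.col i)) / N = (x ⬝ᵥ s) / N + a i := by
  have h_col : x ⬝ᵥ A.col i = N * a i := (congrFun hNa i).symm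
  rw [dotProduct_add, h_col, Int.add_mul_ediv_left _ _ hN]

end Weights

section Operators

variable {ℓ} {Λ} {C}
variable (Φ : ∀ ε ε' : Fin ℓ → Bool, ε ≤ ε' → ∀ (o : {i : Fin ℓ // ε i ≠ ε' i} → Bool)
  (s : Fin ℓ → ℤ), C ε s →ₗ[ZMod 2] C ε' (s + shiftV ℓ Λ o))

variable (ℓ) in
/-- A coefficient for each of the maps `Φ^{ε,ε',o}`, indexed like `piece` by the source vertex `ε`
and the target `p = (ε', s')`. -/
abbrev Coefficients : Type :=
  ∀ (ε : Fin ℓ → Bool) (p : (Fin ℓ → Bool) × (Fin ℓ → ℤ)), Orientation ε p.1 → ZMod 2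

/-- The linear combination of all the maps `Φ^{ε,ε',o}` with given coefficients. -/
noncomputable def weightedSum : Coefficients ℓ →ₗ[ZMod 2] Tot ℓ C →ₗ[ZMod 2] Tot ℓ C where
  toFun c := LinearMap.pi fun p =>
    ∑ ε : {ε // ε ≤ p.1}, ∑ o, c ε p o • piece ℓ Λ C Φ ε p ε.2 o
  map_add' c c' := by
    ext v p
    simp [add_smul, Finset.sum_add_distrib]
  map_smul' r c := by
    ext v p
    simp [mul_smul, Finset.smul_sum]

theorem weightedSum_apply (c : Coefficients ℓ) (v : Tot ℓ C)
    (p : (Fin ℓ → Bool) × (Fin ℓ → ℤ)) :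
    weightedSum Φ c v p =
      ∑ ε : {ε // ε ≤ p.1}, ∑ o, c ε p o • piece ℓ Λ C Φ ε p ε.2 o v := by
  simp [weightedSum]

theorem weightedSum_congr {c c' : Coefficients ℓ}
    (h : ∀ ε p, ε ≤ p.1 → ∀ o, c ε p o = c' ε p o) :
    weightedSum Φ c = weightedSum Φ c' := by
  ext v p
  simp only [weightedSum_apply]
  exact Finset.sum_congr rfl fun ε _ => Finset.sum_congr rfl fun o _ => by rw [h ε p ε.2 o]

theorem Dtot_eq_weightedSum : Dtot ℓ Λ C Φ = weightedSum Φ fun _ _ _ => 1 := by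
  refine congrArg LinearMap.pi (funext fun p => ?_)
  simp only [sum_dite_zero, one_smul]

theorem Fpos_eq_weightedSum (i : Fin ℓ) :
    Fpos ℓ Λ C Φ i = weightedSum Φ fun _ _ o => positiveWeight (Pi.single i 1) o := by
  refine congrArg LinearMap.pi (funext fun p => ?_)
  simp only [sum_dite_zero, positiveWeight_single, dite_smul, ite_smul, one_smul, zero_smul]

theorem Atot_eq_weightedSum (a : Fin ℓ → ℤ) :
    Atot ℓ Λ C Φ a = weightedSum Φ fun _ _ o => positiveWeight (fun i => (a i : ZMod 2)) o := by
  simp only [Atot, Fpos_eq_weightedSum, ← map_smul, ← map_sum]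
  congr 1
  ext ε p o
  simp only [Finset.sum_apply, Pi.smul_apply, smul_eq_mul]
  exact sum_mul_positiveWeight_single _ o

variable (C) in
/-- The operator on the total complex that multiplies `C_ε(s)` by `g ε s`, from which the
null-homotopy is obtained. -/
def scaling (g : (Fin ℓ → Bool) → (Fin ℓ → ℤ) → ZMod 2) : Tot ℓ C →ₗ[ZMod 2] Tot ℓ C :=
  LinearMap.pi fun p => (g p.1 p.2 • LinearMap.id) ∘ₗ LinearMap.proj p

theorem piece_scaling (g : (Fin ℓ → Bool) → (Fin ℓ → ℤ) → ZMod 2) (ε : Fin ℓ → Bool)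
    (p : (Fin ℓ → Bool) × (Fin ℓ → ℤ)) (hle : ε ≤ p.1) (o : Orientation ε p.1) (v : Tot ℓ C) :
    piece ℓ Λ C Φ ε p hle o (scaling C g v) =
      g ε (p.2 - shiftV ℓ Λ o) • piece ℓ Λ C Φ ε p hle o v := by
  simp [piece, scaling]

theorem Dtot_comp_scaling_add_scaling_comp_Dtot (g : (Fin ℓ → Bool) → (Fin ℓ → ℤ) → ZMod 2) :
    Dtot ℓ Λ C Φ ∘ₗ scaling C g + scaling C g ∘ₗ Dtot ℓ Λ C Φ =
      weightedSum Φ fun ε p o => g p.1 p.2 - g ε (p.2 - shiftV ℓ Λ o) := by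
  have h_right : Dtot ℓ Λ C Φ ∘ₗ scaling C g =
      weightedSum Φ fun ε p o => g ε (p.2 - shiftV ℓ Λ o) := by
    ext v p
    simp only [Dtot_eq_weightedSum, LinearMap.comp_apply, weightedSum_apply, piece_scaling,
      one_smul]
  have h_left : scaling C g ∘ₗ Dtot ℓ Λ C Φ = weightedSum Φ fun _ p _ => g p.1 p.2 := by
    ext v p
    simp [Dtot_eq_weightedSum, scaling, weightedSum_apply, Finset.smul_sum]
  rw [h_right, h_left, ← map_add]
  congr 1
  ext ε p o
  exact (add_comm _ _).trans (CharTwo.sub_eq_add _ _).symm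

theorem Atot_eq_of_map_add_col {a : Fin ℓ → ℤ} {h : (Fin ℓ → ℤ) → ZMod 2}
    (hh : ∀ s i, h (s + Λ.col i) = h s + a i) :
    Atot ℓ Λ C Φ a =
      Dtot ℓ Λ C Φ ∘ₗ scaling C (fun ε s => vertexWeight (fun i => (a i : ZMod 2)) ε - h s) +
        scaling C (fun ε s => vertexWeight (fun i => (a i : ZMod 2)) ε - h s) ∘ₗ
          Dtot ℓ Λ C Φ := by
  rw [Atot_eq_weightedSum, Dtot_comp_scaling_add_scaling_comp_Dtot]
  refine weightedSum_congr Φ fun ε p hle o => ?_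
  rw [← vertexWeight_sub_map_coboundary hh hle o (p.2 - shiftV ℓ Λ o), sub_add_cancel]

theorem statement_0_general (a : Fin ℓ → ℤ) (N : ℤ) (hN : N ≠ 0) (x : Fin ℓ → ℤ)
    (hNa : N • a = Matrix.vecMul x Λ) :
    ∃ Hc : ∀ (ε : Fin ℓ → Bool) (s : Fin ℓ → ℤ), C ε s →ₗ[ZMod 2] C ε s,
      Atot ℓ Λ C Φ a =
        Dtot ℓ Λ C Φ ∘ₗ (LinearMap.pi fun p => (Hc p.1 p.2) ∘ₗ (LinearMap.proj p)) +
          (LinearMap.pi fun p => (Hc p.1 p.2) ∘ₗ (LinearMap.proj p)) ∘ₗ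
            Dtot ℓ Λ C Φ := by
  have h_col (s : Fin ℓ → ℤ) (i : Fin ℓ) :
      (((x ⬝ᵥ (s + Λ.col i)) / N : ℤ) : ZMod 2) = ((x ⬝ᵥ s) / N : ℤ) + a i := by
    rw [dotProduct_ediv_add_col hN hNa, Int.cast_add]
  exact ⟨fun ε s => (vertexWeight (fun i => (a i : ZMod 2)) ε - ((x ⬝ᵥ s) / N : ℤ)) • LinearMap.id,
    Atot_eq_of_map_add_col Φ (h := fun s => ((x ⬝ᵥ s) / N : ℤ)) h_col⟩

end Operators

/-- Let `Λ` be a symmetric `ℓ×ℓ` framing matrix and let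
`(C_ε(s), Φ^{ε,ε',o})` be a link-surgery-type hypercube of `𝔽₂`-vector spaces, with
total complex `C = ∏_{ε,s} C_ε(s)` and total differential `D`.  If `a ∈ ℤ^ℓ` satisfies
`N·a = Λx` for some `N ≥ 1` and `x ∈ ℤ^ℓ` (i.e. `a` is torsion in `ℤ^ℓ/im Λ`), then the
action `𝔄_a = Σᵢ aᵢ F^{K_i}` is null-homotopic via a grading-preserving homotopy `H`:
`𝔄_a = D∘H + H∘D`. -/
theorem statement_0 (hℓ : 1 ≤ ℓ) (hΛ : Λ.IsSymm)
    (Φ : ∀ ε ε' : Fin ℓ → Bool, ε ≤ ε' → ∀ (o : {i : Fin ℓ // ε i ≠ ε' i} → Bool)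
      (s : Fin ℓ → ℤ), C ε s →ₗ[ZMod 2] C ε' (s + shiftV ℓ Λ o))
    (a : Fin ℓ → ℤ) (N : ℕ) (hN : 0 < N) (x : Fin ℓ → ℤ)
    (hNa : (N : ℤ) • a = Λ.mulVec x) :
    ∃ Hc : ∀ (ε : Fin ℓ → Bool) (s : Fin ℓ → ℤ), C ε s →ₗ[ZMod 2] C ε s,
      Atot ℓ Λ C Φ a =
        Dtot ℓ Λ C Φ ∘ₗ (LinearMap.pi fun p => (Hc p.1 p.2) ∘ₗ (LinearMap.proj p)) +
          (LinearMap.pi fun p => (Hc p.1 p.2) ∘ₗ (LinearMap.proj p)) ∘ₗ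
            Dtot ℓ Λ C Φ := by
  have hNa' : (N : ℤ) • a = Matrix.vecMul x Λ := by rw [hNa, ← Matrix.vecMul_transpose, hΛ]
  exact statement_0_general Φ a N (by exact_mod_cast hN.ne') x hNa'

end LinkSurgeryHomologyAction
end

section
/- Let Λ be a symmetric ℓ×ℓ integer matrix and let a = (a₁,…,a_ℓ) ∈ ℤ^ℓ. Suppose there exist a positive integer N and x ∈ ℤ^ℓ such that N·a = Λx. Then there exists a function η : ℤ^ℓ → ℤ such that η(s + Λe_i) = η(s) − a_i for all s ∈ ℤ^ℓ and all 1 ≤ i ≤ ℓ, where e_i denotes the i-th standard basis vector (so Λe_i is the i-th column of Λ). -/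
/-!
Euclidean division by `N` turns adding `N * k` to the dividend into adding `k` to the quotient. If
`N • a = x ᵥ* Λ`, translating `s` by the `i`-th column of `Λ` adds `N * a i` to `x ⬝ᵥ s`, hence
exactly `a i` to `x ⬝ᵥ s / N`.
-/

open Matrix

theorem vecMul_eq_mulVec_of_isSymm {n R : Type*} [Fintype n] [NonUnitalCommSemiring R]
    {A : Matrix n n R} (hA : A.IsSymm) (v : n → R) : v ᵥ* A = A *ᵥ v := by
  rw [← mulVec_transpose, hA.eq]

theorem dotProduct_add_col_ediv {m n : Type*} [Fintype m] {Λ : Matrix m n ℤ} {a : n → ℤ} {N : ℤ}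
    (hN : N ≠ 0) {x : m → ℤ} (hNa : N • a = x ᵥ* Λ) (s : m → ℤ) (i : n) :
    x ⬝ᵥ (s + Λ.col i) / N = x ⬝ᵥ s / N + a i := by
  have hcol : x ⬝ᵥ Λ.col i = N * a i := (congrFun hNa i).symm
  rw [dotProduct_add, hcol, Int.add_mul_ediv_left _ _ hN]

theorem statement_1_general {m n : Type*} [Fintype m] {Λ : Matrix m n ℤ} {a : n → ℤ} {N : ℤ}
    (hN : N ≠ 0) {x : m → ℤ} (hNa : N • a = x ᵥ* Λ) :
    ∃ η : (m → ℤ) → ℤ, ∀ (s : m → ℤ) (i : n), η (s + Λ.col i) = η s - a i := by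
  refine ⟨fun s => -(x ⬝ᵥ s / N), fun s i => ?_⟩
  simp only [dotProduct_add_col_ediv hN hNa, neg_add']

/-- Let `Λ` be a symmetric `ℓ×ℓ` integer matrix and `a ∈ ℤ^ℓ`.
If `N • a = Λ x` for some positive integer `N` and some `x ∈ ℤ^ℓ`, then there is a
function `η : ℤ^ℓ → ℤ` with `η (s + Λ eᵢ) = η s - aᵢ` for all `s` and `i`, where
`Λ eᵢ = (fun j => Λ j i)` is the `i`-th column of `Λ`. -/
theorem statement_1 (ℓ : ℕ) (Λ : Matrix (Fin ℓ) (Fin ℓ) ℤ) (hΛ : Λ.IsSymm)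
    (a : Fin ℓ → ℤ) (N : ℕ) (hN : 0 < N) (x : Fin ℓ → ℤ)
    (hNa : (N : ℤ) • a = Λ.mulVec x) :
    ∃ η : (Fin ℓ → ℤ) → ℤ,
      ∀ (s : Fin ℓ → ℤ) (i : Fin ℓ),
        η (s + fun j => Λ j i) = η s - a i :=
  statement_1_general (Nat.cast_ne_zero.mpr hN.ne')
    (hNa.trans (vecMul_eq_mulVec_of_isSymm hΛ x).symm)
end

section
/- Let 𝒞 = (C_ε, D_{ε,ε′}) be an n-dimensional hypercube of chain complexes over 𝔽₂. Suppose that for each ε ∈ {0,1}ⁿ we are given a chain complex (Z_ε, δ_ε) and 𝔽₂-linear maps π_ε : C_ε → Z_ε, i_ε : Z_ε → C_ε and h_ε : C_ε → C_ε such that π_ε and i_ε are chain maps (with respect to the internal differentials D_{ε,ε} and δ_ε) and π_ε∘i_ε = id, i_ε∘π_ε = id + D_{ε,ε}∘h_ε + h_ε∘D_{ε,ε}, h_ε∘h_ε = 0, π_ε∘h_ε = 0 and h_ε∘i_ε = 0. Define δ_{ε,ε} = δ_ε and, for ε < ε′, δ_{ε,ε′} = Σ π_{ε′} ∘ D_{ε_{j−1},ε_j}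 ∘ h_{ε_{j−1}} ∘ D_{ε_{j−2},ε_{j−1}} ∘ ⋯ ∘ h_{ε₂} ∘ D_{ε₁,ε₂} ∘ i_ε, the sum over all strictly increasing sequences ε = ε₁ < ε₂ < ⋯ < ε_j = ε′. Then 𝒵 = (Z_ε, δ_{ε,ε′}) is an n-dimensional hypercube of chain complexes. -/
open scoped Classical

namespace HypercubeHPL

variable (n : ℕ)

/-- Transport of an element along an equality of cube vertices. -/
def castL (A : (Fin n → Bool) → Type) [∀ ε, AddCommGroup (A ε)]
    [∀ ε, Module (ZMod 2) (A ε)] {ε ε' : Fin n → Bool} (h : ε = ε') :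
    A ε →ₗ[ZMod 2] A ε' := by subst h; exact LinearMap.id

/-- The sum, over all strictly increasing sequences `ε = ε₁ < ε₂ < ⋯ < ε_j = ε'`
(of length `j ≤ k + 2`), of the composites
`D_{ε_{j−1},ε_j} ∘ h_{ε_{j−1}} ∘ ⋯ ∘ h_{ε₂} ∘ D_{ε₁,ε₂}`.  Since strictly increasing
sequences in `{0,1}ⁿ` have at most `n+1` terms, taking `k = n` gives the full sum. -/
noncomputable def seqSum (C : (Fin n → Bool) → Type) [∀ ε, AddCommGroup (C ε)]
    [∀ ε, Module (ZMod 2) (C ε)]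
    (D : ∀ ε ε' : Fin n → Bool, ε ≤ ε' → (C ε →ₗ[ZMod 2] C ε'))
    (hmt : ∀ ε, C ε →ₗ[ZMod 2] C ε) :
    ℕ → ∀ ε ε' : Fin n → Bool, ε ≤ ε' → (C ε →ₗ[ZMod 2] C ε')
  | 0, ε, ε', hle => D ε ε' hle
  | (k + 1), ε, ε', hle => D ε ε' hle +
      ∑ ε'' : Fin n → Bool,
        if h2 : ε < ε'' ∧ ε'' < ε' then
          (D ε'' ε' h2.2.le) ∘ₗ (hmt ε'') ∘ₗ (seqSum C D hmt k ε ε'' h2.1.le)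
        else 0

/-- The transferred hypercube structure maps: the internal differential `δ_ε` on the
diagonal, and `δ_{ε,ε'} = Σ π_{ε'} ∘ D ∘ h ∘ ⋯ ∘ h ∘ D ∘ i_ε` (sum over all strictly
increasing sequences from `ε` to `ε'`) when `ε < ε'`. -/
noncomputable def trans (C : (Fin n → Bool) → Type) [∀ ε, AddCommGroup (C ε)]
    [∀ ε, Module (ZMod 2) (C ε)]
    (D : ∀ ε ε' : Fin n → Bool, ε ≤ ε' → (C ε →ₗ[ZMod 2] C ε'))
    (hmt : ∀ ε, C ε →ₗ[ZMod 2] C ε)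
    (Z : (Fin n → Bool) → Type) [∀ ε, AddCommGroup (Z ε)] [∀ ε, Module (ZMod 2) (Z ε)]
    (δZ : ∀ ε, Z ε →ₗ[ZMod 2] Z ε)
    (π : ∀ ε, C ε →ₗ[ZMod 2] Z ε) (inc : ∀ ε, Z ε →ₗ[ZMod 2] C ε)
    (ε ε' : Fin n → Bool) (hle : ε ≤ ε') : Z ε →ₗ[ZMod 2] Z ε' :=
  if heq : ε = ε' then (castL n Z heq) ∘ₗ (δZ ε)
  else (π ε') ∘ₗ (seqSum n C D hmt n ε ε' hle) ∘ₗ (inc ε)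

/-!
Add up all the vertices: on `∏ ε, C ε` the structure maps become one operator `d + P`, with `d` the
diagonal and `P` the strictly increasing part, and the hypercube relation becomes `(d + P) ^ 2 = 0`.
Let `H` be the diagonal operator of the homotopies. The chain sums are the blocks of
`S = P + P H P + P H P H P + ⋯`, which satisfies `S = P (1 + H S) = (1 + S H) P`, and the
transferred maps are the blocks of `δ + π S i`. Substituting `i π = 1 + d H + H d`, the square of
the latter is `π (1 + S H) (d P + P d + P ^ 2) (1 + H S) i = 0`.
-/

section Algebra

variable {R : Type*} [Semiring R]

lemma mul_add_mul_add_mul_one_add_mul_eq_zero {d P H S : R}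
    (hP : d * P + P * d + P * P = 0) (hleft : S = P + P * H * S) (hright : S = P + S * H * P) :
    d * S + S * d + S * (1 + d * H + H * d) * S = 0 := by
  have hS : P * (1 + H * S) = S := by rw [mul_add, mul_one, ← mul_assoc, ← hleft]
  have hS' : (1 + S * H) * P = S := by rw [add_mul, one_mul, ← hright]
  calc
    d * S + S * d + S * (1 + d * H + H * d) * S
      = (1 + S * H) * d * S + S * d * (1 + H * S) + S * S := by
        simp only [mul_add, add_mul, mul_one, one_mul, mul_assoc]
        abel
    _ = (1 + S * H) * d * (P * (1 + H * S)) + (1 + S * H) * P * d * (1 + H * S) +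
          (1 + S * H) * P * (P * (1 + H * S)) := by rw [hS, hS']
    _ = (1 + S * H) * (d * P + P * d + P * P) * (1 + H * S) := by
        simp only [mul_add, add_mul, mul_assoc]
        abel
    _ = 0 := by rw [hP, mul_zero, zero_mul]

theorem perturbed_differential_comp_self_eq_zero {X Y : Type*} [AddCommMonoid X] [Module R X]
    [AddCommMonoid Y] [Module R Y] {d P H S : Module.End R X} {δ : Module.End R Y}
    {p : X →ₗ[R] Y} {i : Y →ₗ[R] X} (hd : d * d = 0) (hdP : (d + P) * (d + P) = 0)
    (hδ : δ ∘ₗ δ = 0) (hp : δ ∘ₗ p = p ∘ₗ d) (hi : d ∘ₗ i = i ∘ₗ δ)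
    (hip : i ∘ₗ p = 1 + d * H + H * d) (hleft : S = P + P * H * S) (hright : S = P + S * H * P) :
    (δ + p ∘ₗ S ∘ₗ i) ∘ₗ (δ + p ∘ₗ S ∘ₗ i) = 0 := by
  have hP : d * P + P * d + P * P = 0 := by
    rw [← hdP, add_mul, mul_add, mul_add, hd, zero_add, ← add_assoc, add_right_comm]
  calc
    (δ + p ∘ₗ S ∘ₗ i) ∘ₗ (δ + p ∘ₗ S ∘ₗ i)
      = δ ∘ₗ δ + ((δ ∘ₗ p) ∘ₗ S ∘ₗ i + p ∘ₗ S ∘ₗ (i ∘ₗ δ) +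
          p ∘ₗ S ∘ₗ (i ∘ₗ p) ∘ₗ S ∘ₗ i) := by
        simp only [LinearMap.comp_add, LinearMap.add_comp, LinearMap.comp_assoc]
        abel
    _ = p ∘ₗ (d * S + S * d + S * (1 + d * H + H * d) * S) ∘ₗ i := by
        rw [hδ, hp, ← hi, hip]
        simp only [Module.End.mul_eq_comp, LinearMap.comp_add, LinearMap.add_comp,
          LinearMap.comp_assoc, zero_add]
    _ = 0 := by
        rw [mul_add_mul_add_mul_one_add_mul_eq_zero hP hleft hright, LinearMap.zero_comp,
          LinearMap.comp_zero]

end Algebra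

section BlockMap

variable {R ι : Type*} [Semiring R] [Fintype ι]
variable {A : ι → Type*} [∀ i, AddCommMonoid (A i)] [∀ i, Module R (A i)]
variable {B : ι → Type*} [∀ i, AddCommMonoid (B i)] [∀ i, Module R (B i)]
variable {E : ι → Type*} [∀ i, AddCommMonoid (E i)] [∀ i, Module R (E i)]

/-- The linear map between products given by a matrix of linear maps, `M i j` being the block from
the `i`-th factor to the `j`-th one. -/
def blockMap (M : ∀ i j, A i →ₗ[R] B j) : (∀ i, A i) →ₗ[R] ∀ j, B j :=
  LinearMap.pi fun j => ∑ i, M i j ∘ₗ LinearMap.proj i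

lemma blockMap_apply (M : ∀ i j, A i →ₗ[R] B j) (x : ∀ i, A i) (j : ι) :
    blockMap M x j = ∑ i, M i j (x i) := by
  simp only [blockMap, LinearMap.pi_apply, LinearMap.sum_apply, LinearMap.comp_apply,
    LinearMap.proj_apply]

lemma blockMap_single (M : ∀ i j, A i →ₗ[R] B j) (i j : ι) (x : A i) :
    blockMap M (Pi.single i x) j = M i j x := by
  rw [blockMap_apply, Fintype.sum_eq_single i fun l hl => by rw [Pi.single_eq_of_ne hl, map_zero],
    Pi.single_eq_same]

lemma blockMap_eq_zero_iff {M : ∀ i j, A i →ₗ[R] B j} : blockMap M = 0 ↔ ∀ i j, M i j = 0 := by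
  refine ⟨fun h i j => LinearMap.ext fun x => ?_, fun h => ?_⟩
  · rw [← blockMap_single, h, LinearMap.zero_apply, Pi.zero_apply, LinearMap.zero_apply]
  · refine LinearMap.ext fun x => funext fun j => ?_
    simp only [blockMap_apply, h, LinearMap.zero_apply, Finset.sum_const_zero, Pi.zero_apply]

lemma blockMap_add (M N : ∀ i j, A i →ₗ[R] B j) :
    blockMap (fun i j => M i j + N i j) = blockMap M + blockMap N := by
  refine LinearMap.ext fun x => funext fun j => ?_
  simp only [blockMap_apply, LinearMap.add_apply, Pi.add_apply, Finset.sum_add_distrib]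

lemma blockMap_comp_blockMap (N : ∀ i j, B i →ₗ[R] E j) (M : ∀ i j, A i →ₗ[R] B j) :
    blockMap N ∘ₗ blockMap M = blockMap fun i k => ∑ j, N j k ∘ₗ M i j := by
  refine LinearMap.ext fun x => funext fun k => ?_
  simp only [LinearMap.comp_apply, blockMap_apply, map_sum, LinearMap.sum_apply]
  exact Finset.sum_comm

lemma piMap_comp_blockMap (f : ∀ j, B j →ₗ[R] E j) (M : ∀ i j, A i →ₗ[R] B j) :
    LinearMap.piMap f ∘ₗ blockMap M = blockMap fun i j => f j ∘ₗ M i j := by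
  refine LinearMap.ext fun x => funext fun j => ?_
  simp only [LinearMap.comp_apply, LinearMap.coe_piMap, Pi.map_apply, blockMap_apply, map_sum]

lemma blockMap_comp_piMap (M : ∀ i j, B i →ₗ[R] E j) (f : ∀ i, A i →ₗ[R] B i) :
    blockMap M ∘ₗ LinearMap.piMap f = blockMap fun i j => M i j ∘ₗ f i := by
  refine LinearMap.ext fun x => funext fun j => ?_
  simp only [LinearMap.comp_apply, LinearMap.coe_piMap, Pi.map_apply, blockMap_apply]

end BlockMap

section Triangular

variable {R ι : Type*} [Semiring R] [PartialOrder ι]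
variable {A : ι → Type*} [∀ i, AddCommMonoid (A i)] [∀ i, Module R (A i)]
variable {B : ι → Type*} [∀ i, AddCommMonoid (B i)] [∀ i, Module R (B i)]

/-- The block matrix with entries `M i j` for `i ≤ j` and `0` elsewhere. -/
noncomputable def ofLE (M : ∀ i j : ι, i ≤ j → (A i →ₗ[R] B j)) (i j : ι) : A i →ₗ[R] B j :=
  if h : i ≤ j then M i j h else 0

/-- The block matrix with entries `M i j` for `i < j` and `0` elsewhere. -/
noncomputable def ofLT (M : ∀ i j : ι, i ≤ j → (A i →ₗ[R] B j)) (i j : ι) : A i →ₗ[R] B j :=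
  if h : i < j then M i j h.le else 0

variable (M : ∀ i j : ι, i ≤ j → (A i →ₗ[R] B j))

lemma ofLT_of_not_lt {i j : ι} (h : ¬i < j) : ofLT M i j = 0 := dif_neg h

lemma ofLT_self (i : ι) : ofLT M i i = 0 := ofLT_of_not_lt M (lt_irrefl i)

lemma ofLE_self (i : ι) : ofLE M i i = M i i le_rfl := dif_pos le_rfl

lemma ofLE_of_ne {i j : ι} (hij : i ≠ j) : ofLE M i j = ofLT M i j := by
  by_cases h : i < j
  · rw [ofLE, ofLT, dif_pos h.le, dif_pos h]
  · rw [ofLE, ofLT, dif_neg h, dif_neg fun hle => h (hle.lt_of_ne hij)]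

variable [Fintype ι]

lemma blockMap_ofLE :
    blockMap (ofLE M) = LinearMap.piMap (fun i => M i i le_rfl) + blockMap (ofLT M) := by
  refine LinearMap.ext fun x => funext fun j => ?_
  have hoff : ∑ i ∈ {j}ᶜ, ofLE M i j (x i) = ∑ i ∈ {j}ᶜ, ofLT M i j (x i) :=
    Finset.sum_congr rfl fun i hi => by rw [ofLE_of_ne M (by simpa using hi)]
  simp only [LinearMap.add_apply, Pi.add_apply, LinearMap.coe_piMap, Pi.map_apply, blockMap_apply]
  rw [Fintype.sum_eq_add_sum_compl j, Fintype.sum_eq_add_sum_compl j, hoff, ofLE_self, ofLT_self,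
    LinearMap.zero_apply, zero_add]

lemma blockMap_ofLT_apply_congr {x y : ∀ i, A i} {j : ι} (h : ∀ i < j, x i = y i) :
    blockMap (ofLT M) x j = blockMap (ofLT M) y j := by
  simp only [blockMap_apply]
  refine Finset.sum_congr rfl fun i _ => ?_
  by_cases hij : i < j
  · rw [h i hij]
  · rw [ofLT_of_not_lt M hij, LinearMap.zero_apply, LinearMap.zero_apply]

lemma eq_of_eq_add_blockMap_ofLT_comp {X : Type*} [AddCommMonoid X] [Module R X]
    {f f' g : X →ₗ[R] ∀ i, B i} {h : ∀ i, B i →ₗ[R] A i}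
    (hf : f = g + blockMap (ofLT M) ∘ₗ LinearMap.piMap h ∘ₗ f)
    (hf' : f' = g + blockMap (ofLT M) ∘ₗ LinearMap.piMap h ∘ₗ f') : f = f' := by
  refine LinearMap.ext fun x => funext fun j => ?_
  induction j using WellFoundedLT.induction with
  | ind j ih =>
    rw [hf, hf']
    simp only [LinearMap.add_apply, Pi.add_apply, LinearMap.comp_apply]
    congr 1
    refine blockMap_ofLT_apply_congr M fun i hij => ?_
    simp only [LinearMap.coe_piMap, Pi.map_apply, ih i hij]

end Triangular

section TwistedComplex

variable {R ι : Type*} [Semiring R] [PartialOrder ι] [Fintype ι]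
variable {C : ι → Type*} [∀ i, AddCommMonoid (C i)] [∀ i, Module R (C i)]

/-- The relation `∑ D j k ∘ D i j = 0` of a hypercube of chain complexes, for structure maps indexed
by a finite poset in place of `{0,1}ⁿ`. No signs appear, whatever the characteristic of `R`. -/
def IsTwistedComplex (D : ∀ i j : ι, i ≤ j → (C i →ₗ[R] C j)) : Prop :=
  ∀ i k : ι, i ≤ k →
    (∑ j : ι, if h : i ≤ j ∧ j ≤ k then D j k h.2 ∘ₗ D i j h.1 else 0) = 0

variable {D : ∀ i j : ι, i ≤ j → (C i →ₗ[R] C j)}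

lemma isTwistedComplex_iff_blockMap_comp_self :
    IsTwistedComplex D ↔ blockMap (ofLE D) ∘ₗ blockMap (ofLE D) = 0 := by
  have hcomp (i j k : ι) : ofLE D j k ∘ₗ ofLE D i j =
      if h : i ≤ j ∧ j ≤ k then D j k h.2 ∘ₗ D i j h.1 else 0 := by
    by_cases hij : i ≤ j <;> by_cases hjk : j ≤ k <;> simp [ofLE, hij, hjk]
  simp only [blockMap_comp_blockMap, blockMap_eq_zero_iff, hcomp]
  refine ⟨fun hD i k => ?_, fun hD i k _ => hD i k⟩
  by_cases hik : i ≤ k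
  · exact hD i k hik
  · exact Finset.sum_eq_zero fun j _ => dif_neg fun h => hik (h.1.trans h.2)

lemma IsTwistedComplex.comp_self (hD : IsTwistedComplex D) (i : ι) :
    D i i le_rfl ∘ₗ D i i le_rfl = 0 := by
  rw [← hD i i le_rfl, Fintype.sum_eq_single i fun j hj => dif_neg fun h => hj (h.2.antisymm h.1),
    dif_pos ⟨le_rfl, le_rfl⟩]

end TwistedComplex

section Transfer

variable {R ι : Type*} [Semiring R] [PartialOrder ι] [Fintype ι]
variable {C : ι → Type*} [∀ i, AddCommMonoid (C i)] [∀ i, Module R (C i)]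
variable {Z : ι → Type*} [∀ i, AddCommMonoid (Z i)] [∀ i, Module R (Z i)]

/-- The sum of `D ∘ h ∘ D ∘ ⋯ ∘ h ∘ D` over all strictly increasing sequences from `i` to `j`,
organised by the last but one element `l` of the sequence. Unlike `seqSum` it carries no bound on
the length of the sequences. -/
noncomputable def chainSum (D : ∀ i j : ι, i ≤ j → (C i →ₗ[R] C j)) (h : ∀ i, C i →ₗ[R] C i)
    (i j : ι) (hij : i ≤ j) : C i →ₗ[R] C j :=
  D i j hij + ∑ l : ι,
    if hl : i < l ∧ l < j then D l j hl.2.le ∘ₗ h l ∘ₗ chainSum D h i l hl.1.le else 0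
termination_by wellFounded_lt.wrap j
decreasing_by exact hl.2

/-- The structure maps transferred from `C` to `Z` along `π` and `inc`: the differential `δ` on the
diagonal and `π ∘ chainSum D h ∘ inc` off it. -/
noncomputable def transfer (D : ∀ i j : ι, i ≤ j → (C i →ₗ[R] C j)) (h : ∀ i, C i →ₗ[R] C i)
    (δ : ∀ i, Z i →ₗ[R] Z i) (π : ∀ i, C i →ₗ[R] Z i) (inc : ∀ i, Z i →ₗ[R] C i)
    (i j : ι) (hij : i ≤ j) : Z i →ₗ[R] Z j :=
  if heq : i = j then heq ▸ δ i else π j ∘ₗ chainSum D h i j hij ∘ₗ inc i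

variable (D : ∀ i j : ι, i ≤ j → (C i →ₗ[R] C j)) (h : ∀ i, C i →ₗ[R] C i)
variable (δ : ∀ i, Z i →ₗ[R] Z i) (π : ∀ i, C i →ₗ[R] Z i) (inc : ∀ i, Z i →ₗ[R] C i)

lemma blockMap_ofLT_chainSum_eq_add_comp_left :
    blockMap (ofLT (chainSum D h)) = blockMap (ofLT D) +
      blockMap (ofLT D) ∘ₗ LinearMap.piMap h ∘ₗ blockMap (ofLT (chainSum D h)) := by
  rw [piMap_comp_blockMap, blockMap_comp_blockMap, ← blockMap_add]
  congr 1
  funext i j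
  have hterm (l : ι) : ofLT D l j ∘ₗ h l ∘ₗ ofLT (chainSum D h) i l =
      if hl : i < l ∧ l < j then D l j hl.2.le ∘ₗ h l ∘ₗ chainSum D h i l hl.1.le else 0 := by
    by_cases hil : i < l <;> by_cases hlj : l < j <;> simp [ofLT, hil, hlj]
  simp only [hterm]
  by_cases hij : i < j
  · rw [ofLT, ofLT, dif_pos hij, dif_pos hij, chainSum]
  · rw [ofLT_of_not_lt _ hij, ofLT_of_not_lt _ hij, zero_add,
      Finset.sum_eq_zero fun l _ => dif_neg fun hl => hij (hl.1.trans hl.2)]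

lemma blockMap_ofLT_chainSum_eq_add_comp_right :
    blockMap (ofLT (chainSum D h)) = blockMap (ofLT D) +
      blockMap (ofLT (chainSum D h)) ∘ₗ LinearMap.piMap h ∘ₗ blockMap (ofLT D) := by
  -- With `S = P + P H S`, the operator `P + S H P` solves the same triangular equation as `S`.
  refine eq_of_eq_add_blockMap_ofLT_comp D (blockMap_ofLT_chainSum_eq_add_comp_left D h) ?_
  conv_lhs => rw [blockMap_ofLT_chainSum_eq_add_comp_left D h]
  simp only [LinearMap.add_comp, LinearMap.comp_add, LinearMap.comp_assoc]

lemma transfer_self (i : ι) : transfer D h δ π inc i i le_rfl = δ i := dif_pos rfl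

lemma transfer_of_lt {i j : ι} (hij : i < j) :
    transfer D h δ π inc i j hij.le = π j ∘ₗ chainSum D h i j hij.le ∘ₗ inc i := dif_neg hij.ne

lemma blockMap_ofLE_transfer :
    blockMap (ofLE (transfer D h δ π inc)) = LinearMap.piMap δ +
      LinearMap.piMap π ∘ₗ blockMap (ofLT (chainSum D h)) ∘ₗ LinearMap.piMap inc := by
  have hlt (i j : ι) :
      ofLT (transfer D h δ π inc) i j = π j ∘ₗ ofLT (chainSum D h) i j ∘ₗ inc i := by
    by_cases hij : i < j
    · rw [ofLT, ofLT, dif_pos hij, dif_pos hij, transfer_of_lt D h δ π inc hij]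
    · rw [ofLT_of_not_lt _ hij, ofLT_of_not_lt _ hij, LinearMap.zero_comp, LinearMap.comp_zero]
  rw [blockMap_ofLE, blockMap_comp_piMap, piMap_comp_blockMap]
  simp only [transfer_self, ← hlt]

end Transfer

theorem statement_7_general {R ι : Type*} [Semiring R] [PartialOrder ι] [Fintype ι]
    {C : ι → Type*} [∀ i, AddCommMonoid (C i)] [∀ i, Module R (C i)]
    {Z : ι → Type*} [∀ i, AddCommMonoid (Z i)] [∀ i, Module R (Z i)]
    {D : ∀ i j : ι, i ≤ j → (C i →ₗ[R] C j)} (hD : IsTwistedComplex D)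
    {h : ∀ i, C i →ₗ[R] C i} {δ : ∀ i, Z i →ₗ[R] Z i}
    {π : ∀ i, C i →ₗ[R] Z i} {inc : ∀ i, Z i →ₗ[R] C i}
    (hδ : ∀ i, δ i ∘ₗ δ i = 0)
    (hπ : ∀ i, δ i ∘ₗ π i = π i ∘ₗ D i i le_rfl)
    (hinc : ∀ i, D i i le_rfl ∘ₗ inc i = inc i ∘ₗ δ i)
    (hincπ : ∀ i, inc i ∘ₗ π i = LinearMap.id + D i i le_rfl ∘ₗ h i + h i ∘ₗ D i i le_rfl) :
    IsTwistedComplex (transfer D h δ π inc) := by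
  have hdP := isTwistedComplex_iff_blockMap_comp_self.1 hD
  rw [blockMap_ofLE] at hdP
  rw [isTwistedComplex_iff_blockMap_comp_self, blockMap_ofLE_transfer]
  refine perturbed_differential_comp_self_eq_zero (d := LinearMap.piMap fun i => D i i le_rfl)
    (H := LinearMap.piMap h) ?_ hdP ?_ ?_ ?_ ?_ (blockMap_ofLT_chainSum_eq_add_comp_left D h)
    (blockMap_ofLT_chainSum_eq_add_comp_right D h)
  · exact LinearMap.ext fun x => funext fun i => LinearMap.congr_fun (hD.comp_self i) (x i)
  · exact LinearMap.ext fun x => funext fun i => LinearMap.congr_fun (hδ i) (x i)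
  · exact LinearMap.ext fun x => funext fun i => LinearMap.congr_fun (hπ i) (x i)
  · exact LinearMap.ext fun x => funext fun i => LinearMap.congr_fun (hinc i) (x i)
  · exact LinearMap.ext fun x => funext fun i => LinearMap.congr_fun (hincπ i) (x i)

section Cube

variable {n : ℕ}

/-- The number of coordinates of a cube vertex equal to `1`. -/
def weight (ε : Fin n → Bool) : ℕ := ∑ i, (ε i).toNat

lemma weight_strictMono : StrictMono (weight (n := n)) := by
  intro ε ε' hlt
  obtain ⟨hle, i, hi⟩ := Pi.lt_def.1 hlt
  have htoNat : StrictMono Bool.toNat := by decide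
  exact Finset.sum_lt_sum (fun j _ => htoNat.monotone (hle j)) ⟨i, Finset.mem_univ i, htoNat hi⟩

lemma weight_le (ε : Fin n → Bool) : weight ε ≤ n := by
  simpa [weight] using Finset.sum_le_card_nsmul Finset.univ (fun i => (ε i).toNat) 1
    fun i _ => Bool.toNat_le (ε i)

variable {C : (Fin n → Bool) → Type} [∀ ε, AddCommGroup (C ε)] [∀ ε, Module (ZMod 2) (C ε)]

lemma seqSum_eq_chainSum (D : ∀ ε ε' : Fin n → Bool, ε ≤ ε' → (C ε →ₗ[ZMod 2] C ε'))
    (h : ∀ ε, C ε →ₗ[ZMod 2] C ε) {k : ℕ} {ε ε' : Fin n → Bool} (hle : ε ≤ ε')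
    (hk : weight ε' ≤ weight ε + k + 1) :
    seqSum n C D h k ε ε' hle = chainSum D h ε ε' hle := by
  induction k generalizing ε' with
  | zero =>
    rw [seqSum, chainSum, Finset.sum_eq_zero, add_zero]
    rintro l -
    refine dif_neg fun hl => ?_
    have := weight_strictMono hl.1
    have := weight_strictMono hl.2
    omega
  | succ k ih =>
    rw [seqSum, chainSum]
    congr 1
    refine Finset.sum_congr rfl fun l _ => ?_
    by_cases hl : ε < l ∧ l < ε'
    · have := weight_strictMono hl.2
      rw [dif_pos hl, dif_pos hl, ih hl.1.le (by omega)]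
    · rw [dif_neg hl, dif_neg hl]

lemma trans_eq_transfer (D : ∀ ε ε' : Fin n → Bool, ε ≤ ε' → (C ε →ₗ[ZMod 2] C ε'))
    (h : ∀ ε, C ε →ₗ[ZMod 2] C ε)
    {Z : (Fin n → Bool) → Type} [∀ ε, AddCommGroup (Z ε)] [∀ ε, Module (ZMod 2) (Z ε)]
    (δ : ∀ ε, Z ε →ₗ[ZMod 2] Z ε) (π : ∀ ε, C ε →ₗ[ZMod 2] Z ε) (inc : ∀ ε, Z ε →ₗ[ZMod 2] C ε) :
    trans n C D h Z δ π inc = transfer D h δ π inc := by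
  funext ε ε' hle
  obtain rfl | hlt := hle.eq_or_lt
  · rw [transfer_self, trans, dif_pos rfl]
    rfl
  · have := weight_le ε'
    rw [transfer_of_lt D h δ π inc hlt, trans, dif_neg hlt.ne,
      seqSum_eq_chainSum D h hle (by omega)]

end Cube

/-- homological perturbation lemma for hypercubes, structure maps.
Given an `n`-dimensional hypercube of chain complexes `(C_ε, D_{ε,ε'})` over `𝔽₂` and a
strong deformation retraction onto complexes `(Z_ε, δ_ε)` at each vertex, the
transferred maps `δ_{ε,ε'}` form an `n`-dimensional hypercube of chain complexes. -/
theorem statement_7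
    (C : (Fin n → Bool) → Type) [∀ ε, AddCommGroup (C ε)] [∀ ε, Module (ZMod 2) (C ε)]
    (D : ∀ ε ε' : Fin n → Bool, ε ≤ ε' → (C ε →ₗ[ZMod 2] C ε'))
    (hD : ∀ ε ε'' : Fin n → Bool, ε ≤ ε'' →
      (∑ ε' : Fin n → Bool,
        if h2 : ε ≤ ε' ∧ ε' ≤ ε'' then (D ε' ε'' h2.2) ∘ₗ (D ε ε' h2.1) else 0) = 0)
    (Z : (Fin n → Bool) → Type) [∀ ε, AddCommGroup (Z ε)] [∀ ε, Module (ZMod 2) (Z ε)]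
    (δZ : ∀ ε, Z ε →ₗ[ZMod 2] Z ε) (hδZ : ∀ ε, δZ ε ∘ₗ δZ ε = 0)
    (π : ∀ ε, C ε →ₗ[ZMod 2] Z ε) (inc : ∀ ε, Z ε →ₗ[ZMod 2] C ε)
    (hmt : ∀ ε, C ε →ₗ[ZMod 2] C ε)
    (hπchain : ∀ ε, δZ ε ∘ₗ π ε = π ε ∘ₗ D ε ε le_rfl)
    (hincchain : ∀ ε, D ε ε le_rfl ∘ₗ inc ε = inc ε ∘ₗ δZ ε)
    (hπinc : ∀ ε, π ε ∘ₗ inc ε = LinearMap.id)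
    (hincπ : ∀ ε, inc ε ∘ₗ π ε =
      LinearMap.id + D ε ε le_rfl ∘ₗ hmt ε + hmt ε ∘ₗ D ε ε le_rfl)
    (hhh : ∀ ε, hmt ε ∘ₗ hmt ε = 0)
    (hπh : ∀ ε, π ε ∘ₗ hmt ε = 0)
    (hhinc : ∀ ε, hmt ε ∘ₗ inc ε = 0) :
    ∀ ε ε'' : Fin n → Bool, ∀ _ : ε ≤ ε'',
      (∑ ε' : Fin n → Bool,
        if h2 : ε ≤ ε' ∧ ε' ≤ ε'' then
          (trans n C D hmt Z δZ π inc ε' ε'' h2.2) ∘ₗ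
            (trans n C D hmt Z δZ π inc ε ε' h2.1)
        else 0) = 0 := by
  rw [trans_eq_transfer]
  exact statement_7_general hD hδZ hπchain hincchain hincπ

end HypercubeHPL
end

section
/- Let 𝒞 = (C_ε, D_{ε,ε′}) be an n-dimensional hypercube of chain complexes over 𝔽₂, and suppose given chain complexes (Z_ε, δ_ε) and maps π_ε : C_ε → Z_ε, i_ε : Z_ε → C_ε, h_ε : C_ε → C_ε such that π_ε and i_ε are chain maps and π_ε∘i_ε = id, i_ε∘π_ε = id + D_{ε,ε}∘h_ε + h_ε∘D_{ε,ε}, h_ε∘h_ε = 0, π_ε∘h_ε = 0, h_ε∘i_ε = 0. Let 𝒵 = (Z_ε, δ_{ε,ε′}) be the transferred hypercube, with δ_{ε,ε′} = Σ π_{ε′} D_{ε_{j−1},ε_j} h_{ε_{j−1}} ⋯ h_{ε₂} D_{ε₁,ε₂} i_ε summed over strictly increasing sequences ε = ε₁ < ⋯ < ε_j = ε′. Define I_{ε,ε} = i_ε and, for ε < ε′, I_{ε,ε′} = Σ h_{ε_j} D_{ε_{j−1},ε_j} ⋯ h_{ε₂} D_{ε₁,ε₂} i_ε, and define Π_{ε,ε}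 = π_ε and, for ε < ε′, Π_{ε,ε′} = Σ π_{ε′} D_{ε_{j−1},ε_j} h_{ε_{j−1}} ⋯ D_{ε₁,ε₂} h_{ε₁}, both summed over strictly increasing sequences from ε to ε′. Then I = (I_{ε,ε′}) is a morphism of hypercubes from 𝒵 to 𝒞, Π = (Π_{ε,ε′}) is a morphism of hypercubes from 𝒞 to 𝒵, Π∘I equals the identity morphism of 𝒵, and there exists a collection of maps H = (H_{ε,ε′} : C_ε → C_{ε′})_{ε ≤ ε′} such that I∘Π equals the identity morphism of 𝒞 plus ∂_Mor(H). -/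
open scoped Classical

namespace HypercubeHPL8

variable (n : ℕ)

/-- Transport of an element along an equality of cube vertices. -/
def castL (A : (Fin n → Bool) → Type) [∀ ε, AddCommGroup (A ε)]
    [∀ ε, Module (ZMod 2) (A ε)] {ε ε' : Fin n → Bool} (h : ε = ε') :
    A ε →ₗ[ZMod 2] A ε' := by subst h; exact LinearMap.id

/-- The sum, over all strictly increasing sequences `ε = ε₁ < ε₂ < ⋯ < ε_j = ε'`
(of length `j ≤ k + 2`), of `D_{ε_{j−1},ε_j} ∘ h_{ε_{j−1}} ∘ ⋯ ∘ h_{ε₂} ∘ D_{ε₁,ε₂}`.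
Taking `k = n` gives the full sum over all strictly increasing sequences. -/
noncomputable def seqSum (C : (Fin n → Bool) → Type) [∀ ε, AddCommGroup (C ε)]
    [∀ ε, Module (ZMod 2) (C ε)]
    (D : ∀ ε ε' : Fin n → Bool, ε ≤ ε' → (C ε →ₗ[ZMod 2] C ε'))
    (hmt : ∀ ε, C ε →ₗ[ZMod 2] C ε) :
    ℕ → ∀ ε ε' : Fin n → Bool, ε ≤ ε' → (C ε →ₗ[ZMod 2] C ε')
  | 0, ε, ε', hle => D ε ε' hle
  | (k + 1), ε, ε', hle => D ε ε' hle +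
      ∑ ε'' : Fin n → Bool,
        if h2 : ε < ε'' ∧ ε'' < ε' then
          (D ε'' ε' h2.2.le) ∘ₗ (hmt ε'') ∘ₗ (seqSum C D hmt k ε ε'' h2.1.le)
        else 0

section Data

variable (C : (Fin n → Bool) → Type) [∀ ε, AddCommGroup (C ε)] [∀ ε, Module (ZMod 2) (C ε)]
variable (D : ∀ ε ε' : Fin n → Bool, ε ≤ ε' → (C ε →ₗ[ZMod 2] C ε'))
variable (hmt : ∀ ε, C ε →ₗ[ZMod 2] C ε)
variable (Z : (Fin n → Bool) → Type) [∀ ε, AddCommGroup (Z ε)] [∀ ε, Module (ZMod 2) (Z ε)]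
variable (δZ : ∀ ε, Z ε →ₗ[ZMod 2] Z ε)
variable (π : ∀ ε, C ε →ₗ[ZMod 2] Z ε) (inc : ∀ ε, Z ε →ₗ[ZMod 2] C ε)

/-- The transferred hypercube structure maps on the `Z`-complexes. -/
noncomputable def trans (ε ε' : Fin n → Bool) (hle : ε ≤ ε') : Z ε →ₗ[ZMod 2] Z ε' :=
  if heq : ε = ε' then (castL n Z heq) ∘ₗ (δZ ε)
  else (π ε') ∘ₗ (seqSum n C D hmt n ε ε' hle) ∘ₗ (inc ε)

/-- The inclusion morphism `I`: `I_{ε,ε} = i_ε` and, for `ε < ε'`,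
`I_{ε,ε'} = Σ h_{ε_j} D_{ε_{j−1},ε_j} ⋯ h_{ε₂} D_{ε₁,ε₂} i_ε`. -/
noncomputable def Imor (ε ε' : Fin n → Bool) (hle : ε ≤ ε') : Z ε →ₗ[ZMod 2] C ε' :=
  if heq : ε = ε' then (castL n C heq) ∘ₗ (inc ε)
  else (hmt ε') ∘ₗ (seqSum n C D hmt n ε ε' hle) ∘ₗ (inc ε)

/-- The projection morphism `Π`: `Π_{ε,ε} = π_ε` and, for `ε < ε'`,
`Π_{ε,ε'} = Σ π_{ε'} D_{ε_{j−1},ε_j} h_{ε_{j−1}} ⋯ D_{ε₁,ε₂} h_{ε₁}`. -/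
noncomputable def Pmor (ε ε' : Fin n → Bool) (hle : ε ≤ ε') : C ε →ₗ[ZMod 2] Z ε' :=
  if heq : ε = ε' then (castL n Z heq) ∘ₗ (π ε)
  else (π ε') ∘ₗ (seqSum n C D hmt n ε ε' hle) ∘ₗ (hmt ε)

end Data

/-!
The homological perturbation lemma is applied to the total spaces `∏ ε, C ε` and `∏ ε, Z ε`. The
diagonal maps form a strong deformation retract `(d, δ, i, p, h)`, and the off-diagonal part `P` of
the hypercube differential is a perturbation of `d`. Since strictly increasing sequences of vertices
have bounded length, the sum `A` of the words `P h P h ⋯ h P` is finite and satisfies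
`A = P + P h A = P + A h P`, whence `A = (1 + A h) P = P (1 + h A)` and
`d A + A d + A i p A = (1 + A h) (d P + P d + P P) (1 + h A) = 0`.
This identity makes `(d + P, δ + p A i, i + h A i, p + p A h, h + h A h)` a strong deformation
retract again. With the convention `i p = 1 + d h + h d` no signs occur over any ring; in
characteristic two, `a = b` then reads `a + b = 0`, the form of the morphism equations.
-/

section Perturbation

theorem perturbation_identity {S : Type*} [Ring S] {d h P A : S} (hdd : d * d = 0)
    (hdP : (d + P) * (d + P) = 0) (hA : A = P + P * h * A) (hA' : A = P + A * h * P) :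
    d * A + A * d + A * (1 + d * h + h * d) * A = 0 := by
  have hP : d * P + P * d + P * P = 0 := by
    rw [← hdP, add_mul, mul_add, mul_add, hdd]
    abel
  have hl : A = (1 + A * h) * P := by rw [add_mul, one_mul, ← hA']
  have hr : A = P * (1 + h * A) := by rw [mul_add, mul_one, ← mul_assoc, ← hA]
  calc d * A + A * d + A * (1 + d * h + h * d) * A
      = (1 + A * h) * (d * A) + A * d * (1 + h * A) + A * A := by noncomm_ring
    _ = (1 + A * h) * (d * (P * (1 + h * A))) + (1 + A * h) * P * d * (1 + h * A) +
          (1 + A * h) * P * (P * (1 + h * A)) := by rw [← hl, ← hr]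
    _ = (1 + A * h) * (d * P + P * d + P * P) * (1 + h * A) := by noncomm_ring
    _ = 0 := by rw [hP, mul_zero, zero_mul]

open LinearMap

section

variable {R U V W : Type*} [Semiring R] [AddCommMonoid U] [Module R U] [AddCommMonoid V]
  [Module R V] [AddCommMonoid W] [Module R W]
variable {d h P A : V →ₗ[R] V} {δ : W →ₗ[R] W} {i : W →ₗ[R] V} {p : V →ₗ[R] W}

theorem add_comp_add_transfer (hA : A = P + P ∘ₗ h ∘ₗ A) (f : U →ₗ[R] V) :
    (d + P) ∘ₗ (f + h ∘ₗ A ∘ₗ f) = d ∘ₗ f + A ∘ₗ f + d ∘ₗ h ∘ₗ A ∘ₗ f := by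
  have hAf : A ∘ₗ f = P ∘ₗ f + P ∘ₗ h ∘ₗ A ∘ₗ f := congr($hA ∘ₗ f)
  rw [add_comp, comp_add, comp_add, ← hAf, add_right_comm]

theorem add_transfer_comp_add (hA' : A = P + A ∘ₗ h ∘ₗ P) (g : V →ₗ[R] U) :
    (g + g ∘ₗ A ∘ₗ h) ∘ₗ (d + P) = g ∘ₗ d + g ∘ₗ A + g ∘ₗ A ∘ₗ h ∘ₗ d := by
  have hgA : g ∘ₗ A = g ∘ₗ P + (g ∘ₗ A ∘ₗ h) ∘ₗ P := by
    rw [comp_assoc, comp_assoc, ← comp_add, ← hA']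
  rw [comp_add, add_comp, add_comp, ← hgA, add_right_comm, comp_assoc, comp_assoc]

/-- Strong deformation retract data from `(V, d)` to `(W, δ)`: an inclusion `i`, a projection `p`
and a homotopy `h` from the identity to `i ∘ p`, subject to the side conditions
`h ∘ h = 0`, `p ∘ h = 0` and `h ∘ i = 0`. -/
structure IsSDR (d : V →ₗ[R] V) (δ : W →ₗ[R] W) (i : W →ₗ[R] V) (p : V →ₗ[R] W)
    (h : V →ₗ[R] V) : Prop where
  d_comp_d : d ∘ₗ d = 0
  d_comp_i : d ∘ₗ i = i ∘ₗ δ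
  δ_comp_p : δ ∘ₗ p = p ∘ₗ d
  p_comp_i : p ∘ₗ i = LinearMap.id
  i_comp_p : i ∘ₗ p = LinearMap.id + d ∘ₗ h + h ∘ₗ d
  h_comp_h : h ∘ₗ h = 0
  p_comp_h : p ∘ₗ h = 0
  h_comp_i : h ∘ₗ i = 0

namespace IsSDR

theorem pi {ι : Type*} {V W : ι → Type*} [∀ k, AddCommMonoid (V k)] [∀ k, Module R (V k)]
    [∀ k, AddCommMonoid (W k)] [∀ k, Module R (W k)] {d h : ∀ k, V k →ₗ[R] V k}
    {δ : ∀ k, W k →ₗ[R] W k} {i : ∀ k, W k →ₗ[R] V k} {p : ∀ k, V k →ₗ[R] W k}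
    (hs : ∀ k, IsSDR (d k) (δ k) (i k) (p k) (h k)) :
    IsSDR (.piMap d) (.piMap δ) (.piMap i) (.piMap p) (.piMap h) where
  d_comp_d := LinearMap.ext fun x => funext fun k => LinearMap.congr_fun (hs k).d_comp_d (x k)
  d_comp_i := LinearMap.ext fun x => funext fun k => LinearMap.congr_fun (hs k).d_comp_i (x k)
  δ_comp_p := LinearMap.ext fun x => funext fun k => LinearMap.congr_fun (hs k).δ_comp_p (x k)
  p_comp_i := LinearMap.ext fun x => funext fun k => LinearMap.congr_fun (hs k).p_comp_i (x k)
  i_comp_p := LinearMap.ext fun x => funext fun k => LinearMap.congr_fun (hs k).i_comp_p (x k)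
  h_comp_h := LinearMap.ext fun x => funext fun k => LinearMap.congr_fun (hs k).h_comp_h (x k)
  p_comp_h := LinearMap.ext fun x => funext fun k => LinearMap.congr_fun (hs k).p_comp_h (x k)
  h_comp_i := LinearMap.ext fun x => funext fun k => LinearMap.congr_fun (hs k).h_comp_i (x k)

theorem i_comp_p_comp (hs : IsSDR d δ i p h) (f : U →ₗ[R] V) :
    i ∘ₗ p ∘ₗ f = f + d ∘ₗ h ∘ₗ f + h ∘ₗ d ∘ₗ f := by
  rw [← comp_assoc, hs.i_comp_p]
  rfl

theorem δ_comp_p_comp (hs : IsSDR d δ i p h) (f : U →ₗ[R] V) :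
    δ ∘ₗ p ∘ₗ f = p ∘ₗ d ∘ₗ f := by
  rw [← comp_assoc, hs.δ_comp_p, comp_assoc]

theorem p_comp_h_comp (hs : IsSDR d δ i p h) (f : U →ₗ[R] V) : p ∘ₗ h ∘ₗ f = 0 := by
  rw [← comp_assoc, hs.p_comp_h, zero_comp]

theorem h_comp_h_comp (hs : IsSDR d δ i p h) (f : U →ₗ[R] V) : h ∘ₗ h ∘ₗ f = 0 := by
  rw [← comp_assoc, hs.h_comp_h, zero_comp]

end IsSDR

end

namespace IsSDR

variable {R U V W : Type*} [Semiring R] [AddCommMonoid U] [Module R U] [AddCommGroup V]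
  [Module R V] [AddCommGroup W] [Module R W]
variable {d h P A : V →ₗ[R] V} {δ : W →ₗ[R] W} {i : W →ₗ[R] V} {p : V →ₗ[R] W}

theorem transfer_comp (hs : IsSDR d δ i p h) (hdP : (d + P) ∘ₗ (d + P) = 0)
    (hA : A = P + P ∘ₗ h ∘ₗ A) (hA' : A = P + A ∘ₗ h ∘ₗ P) (f : U →ₗ[R] V) :
    A ∘ₗ i ∘ₗ p ∘ₗ A ∘ₗ f = -(d ∘ₗ A ∘ₗ f + A ∘ₗ d ∘ₗ f) := by
  have key : d ∘ₗ A + A ∘ₗ d + A ∘ₗ (i ∘ₗ p) ∘ₗ A = 0 := by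
    rw [hs.i_comp_p]
    exact perturbation_identity (S := Module.End R V) hs.d_comp_d hdP hA hA'
  exact congr($(eq_neg_of_add_eq_zero_right key) ∘ₗ f)

theorem perturb (hs : IsSDR d δ i p h) (hdP : (d + P) ∘ₗ (d + P) = 0)
    (hA : A = P + P ∘ₗ h ∘ₗ A) (hA' : A = P + A ∘ₗ h ∘ₗ P) :
    IsSDR (d + P) (δ + p ∘ₗ A ∘ₗ i) (i + h ∘ₗ A ∘ₗ i) (p + p ∘ₗ A ∘ₗ h) (h + h ∘ₗ A ∘ₗ h) where
  d_comp_d := hdP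
  d_comp_i := by
    rw [add_comp_add_transfer hA]
    simp only [add_comp, comp_add, comp_assoc, hs.transfer_comp hdP hA hA']
    simp only [hs.i_comp_p_comp, hs.d_comp_i, comp_neg, comp_add]
    abel
  δ_comp_p := by
    rw [add_transfer_comp_add hA']
    simp only [add_comp, comp_add, comp_assoc, hs.transfer_comp hdP hA hA']
    simp only [hs.i_comp_p, hs.δ_comp_p, hs.δ_comp_p_comp, comp_neg, comp_add, comp_id]
    abel
  p_comp_i := by
    simp only [add_comp, comp_add, comp_assoc, hs.h_comp_h_comp, hs.p_comp_h_comp, hs.h_comp_i,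
      hs.p_comp_i, comp_zero, add_zero]
  i_comp_p := by
    rw [add_comp_add_transfer hA, add_transfer_comp_add hA']
    simp only [add_comp, comp_add, comp_assoc, hs.transfer_comp hdP hA hA']
    simp only [hs.i_comp_p, hs.i_comp_p_comp, comp_neg, comp_add, comp_id]
    abel
  h_comp_h := by
    simp only [add_comp, comp_add, comp_assoc, hs.h_comp_h, hs.h_comp_h_comp, comp_zero, add_zero]
  p_comp_h := by
    simp only [add_comp, comp_add, comp_assoc, hs.h_comp_h, hs.h_comp_h_comp, hs.p_comp_h,
      hs.p_comp_h_comp, comp_zero, add_zero]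
  h_comp_i := by
    simp only [add_comp, comp_add, comp_assoc, hs.h_comp_i, hs.h_comp_h_comp, comp_zero, add_zero]

end IsSDR

end Perturbation

section TotalMap

variable {ι R : Type*} [Fintype ι] [Semiring R]
variable {A B E : ι → Type*} [∀ i, AddCommMonoid (A i)] [∀ i, Module R (A i)]
  [∀ i, AddCommMonoid (B i)] [∀ i, Module R (B i)]
  [∀ i, AddCommMonoid (E i)] [∀ i, Module R (E i)]

/-- The linear map `∏ i, A i → ∏ j, B j` assembled from a family of components `f i j`, indexed by
the related pairs `r i j`; all other components are zero. -/
noncomputable def totalMap {r : ι → ι → Prop} (f : ∀ i j, r i j → A i →ₗ[R] B j) :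
    (∀ i, A i) →ₗ[R] ∀ j, B j :=
  LinearMap.pi fun j => ∑ i, if h : r i j then f i j h ∘ₗ LinearMap.proj i else 0

theorem totalMap_apply {r : ι → ι → Prop} (f : ∀ i j, r i j → A i →ₗ[R] B j) (x : ∀ i, A i)
    (j : ι) : totalMap f x j = ∑ i, if h : r i j then f i j h (x i) else 0 := by
  simp only [totalMap, LinearMap.pi_apply, LinearMap.sum_apply]
  refine Finset.sum_congr rfl fun i _ => ?_
  split_ifs <;> rfl

theorem totalMap_single {r : ι → ι → Prop} (f : ∀ i j, r i j → A i →ₗ[R] B j) (i j : ι) (a : A i) :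
    totalMap f (Pi.single i a) j = if h : r i j then f i j h a else 0 := by
  rw [totalMap_apply, Finset.sum_eq_single i _ (by simp), Pi.single_eq_same]
  intro k _ hk
  simp only [Pi.single_eq_of_ne hk, map_zero, dite_eq_ite, ite_self]

theorem totalMap_injective {r : ι → ι → Prop} :
    Function.Injective (totalMap : (∀ i j, r i j → A i →ₗ[R] B j) → _) := by
  intro f g hfg
  ext i j h a
  simpa only [totalMap_single, dif_pos h] using congr($hfg (Pi.single i a) j)

theorem totalMap_zero {r : ι → ι → Prop} :
    totalMap (fun i j (_ : r i j) => (0 : A i →ₗ[R] B j)) = 0 := by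
  refine LinearMap.pi_ext fun i a => funext fun j => ?_
  simp [totalMap_single]

theorem totalMap_add {r : ι → ι → Prop} (f g : ∀ i j, r i j → A i →ₗ[R] B j) :
    totalMap (fun i j h => f i j h + g i j h) = totalMap f + totalMap g := by
  refine LinearMap.pi_ext fun i a => funext fun j => ?_
  rw [LinearMap.add_apply, Pi.add_apply, totalMap_single, totalMap_single, totalMap_single]
  split_ifs <;> simp

theorem totalMap_comp {r : ι → ι → Prop} [IsTrans ι r] (g : ∀ i j, r i j → B i →ₗ[R] E j)
    (f : ∀ i j, r i j → A i →ₗ[R] B j) :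
    totalMap g ∘ₗ totalMap f = totalMap fun i k (_ : r i k) =>
      ∑ j, if h : r i j ∧ r j k then g j k h.2 ∘ₗ f i j h.1 else 0 := by
  refine LinearMap.pi_ext fun i a => funext fun k => ?_
  have hterm (j : ι) : (if h : r j k then g j k h (totalMap f (Pi.single i a) j) else 0) =
      (if h : r i j ∧ r j k then g j k h.2 ∘ₗ f i j h.1 else 0) a := by
    rw [totalMap_single]
    by_cases hij : r i j <;> by_cases hjk : r j k <;> simp [hij, hjk]
  rw [LinearMap.comp_apply, totalMap_apply, totalMap_single]
  simp only [hterm]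
  split_ifs with hik
  · rw [LinearMap.sum_apply]
  · refine Finset.sum_eq_zero fun j _ => ?_
    rw [dif_neg fun h => hik (_root_.trans h.1 h.2), LinearMap.zero_apply]

theorem totalMap_comp_add_comp {B' : ι → Type*} [∀ i, AddCommMonoid (B' i)] [∀ i, Module R (B' i)]
    {r : ι → ι → Prop} [IsTrans ι r] (g : ∀ i j, r i j → B i →ₗ[R] E j)
    (f : ∀ i j, r i j → A i →ₗ[R] B j) (g' : ∀ i j, r i j → B' i →ₗ[R] E j)
    (f' : ∀ i j, r i j → A i →ₗ[R] B' j) :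
    totalMap g ∘ₗ totalMap f + totalMap g' ∘ₗ totalMap f' = totalMap fun i k (_ : r i k) =>
      ∑ j, if h : r i j ∧ r j k then g j k h.2 ∘ₗ f i j h.1 + g' j k h.2 ∘ₗ f' i j h.1 else 0 := by
  simp only [totalMap_comp, ← totalMap_add, ← Finset.sum_add_distrib]
  congr! with i k _ j
  split_ifs <;> simp

theorem piMap_comp_totalMap {r : ι → ι → Prop} (u : ∀ i, B i →ₗ[R] E i)
    (f : ∀ i j, r i j → A i →ₗ[R] B j) :
    .piMap u ∘ₗ totalMap f = totalMap fun i j h => u j ∘ₗ f i j h := by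
  refine LinearMap.pi_ext fun i a => funext fun j => ?_
  rw [LinearMap.comp_apply, LinearMap.coe_piMap, Pi.map_apply, totalMap_single, totalMap_single]
  split_ifs <;> simp

theorem totalMap_comp_piMap {r : ι → ι → Prop} (f : ∀ i j, r i j → B i →ₗ[R] E j)
    (u : ∀ i, A i →ₗ[R] B i) :
    totalMap f ∘ₗ .piMap u = totalMap fun i j h => f i j h ∘ₗ u i :=
  LinearMap.ext fun x => funext fun j => by
    simp only [LinearMap.comp_apply, totalMap_apply, LinearMap.coe_piMap, Pi.map_apply]

/-- The off-diagonal components of a family indexed by the pairs `i ≤ j`. -/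
def strictPart [Preorder ι] (f : ∀ i j, i ≤ j → A i →ₗ[R] B j) (i j : ι) (h : i < j) :
    A i →ₗ[R] B j :=
  f i j h.le

theorem totalMap_eq_diag_add_strictPart [PartialOrder ι] (f : ∀ i j, i ≤ j → A i →ₗ[R] B j) :
    totalMap f = .piMap (fun i => f i i le_rfl) + totalMap (strictPart f) := by
  refine LinearMap.pi_ext fun i a => funext fun j => ?_
  rw [LinearMap.add_apply, Pi.add_apply, totalMap_single, totalMap_single, LinearMap.coe_piMap,
    Pi.map_apply]
  rcases eq_or_ne i j with rfl | hij
  · simp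
  · simp [Pi.single_eq_of_ne' hij, hij.le_iff_lt, strictPart]

end TotalMap

section Hypercube

variable {n}

/-- The number `|ε|` of coordinates of the cube vertex `ε` equal to one. -/
def weight (ε : Fin n → Bool) : ℕ := ∑ i, (ε i).toNat

theorem weight_strictMono : StrictMono (weight (n := n)) := by
  intro ε ε' h
  obtain ⟨hle, i, hi⟩ := Pi.lt_def.1 h
  have hmono : StrictMono Bool.toNat := by decide
  exact Finset.sum_lt_sum (fun j _ => hmono.monotone (hle j)) ⟨i, Finset.mem_univ i, hmono hi⟩

theorem weight_le (ε : Fin n → Bool) : weight ε ≤ n := by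
  simpa [weight] using Finset.sum_le_card_nsmul Finset.univ (fun i => (ε i).toNat) 1 fun i _ =>
    Bool.toNat_le (ε i)

variable {A B : (Fin n → Bool) → Type}
  [∀ ε, AddCommGroup (A ε)] [∀ ε, Module (ZMod 2) (A ε)]
  [∀ ε, AddCommGroup (B ε)] [∀ ε, Module (ZMod 2) (B ε)]
variable (D : ∀ ε ε' : Fin n → Bool, ε ≤ ε' → (A ε →ₗ[ZMod 2] A ε'))
  (h : ∀ ε, A ε →ₗ[ZMod 2] A ε)

theorem seqSum_succ_eq_of_weight_le {k : ℕ} {ε ε' : Fin n → Bool} (hle : ε ≤ ε')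
    (hw : weight ε' ≤ weight ε + k + 1) :
    seqSum n A D h (k + 1) ε ε' hle = seqSum n A D h k ε ε' hle := by
  induction k generalizing ε' with
  | zero =>
    have hnone_between (ε'' : Fin n → Bool) : ¬(ε < ε'' ∧ ε'' < ε') := fun ⟨h₁, h₂⟩ => by
      have := weight_strictMono h₁
      have := weight_strictMono h₂
      omega
    simp only [seqSum, hnone_between, dite_false, Finset.sum_const_zero, add_zero]
  | succ k ih =>
    rw [seqSum]
    conv_rhs => rw [seqSum]
    congr! 4 with ε'' _ hε''
    have := weight_strictMono hε''.2
    rw [ih hε''.1.le (by omega)]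

theorem totalMap_strictPart_seqSum_succ (k : ℕ) :
    totalMap (strictPart (seqSum n A D h (k + 1))) =
      totalMap (strictPart D) +
        totalMap (strictPart D) ∘ₗ .piMap h ∘ₗ totalMap (strictPart (seqSum n A D h k)) := by
  rw [piMap_comp_totalMap, totalMap_comp, ← totalMap_add]
  rfl

theorem totalMap_strictPart_seqSum_succ' (k : ℕ) :
    totalMap (strictPart (seqSum n A D h (k + 1))) =
      totalMap (strictPart D) +
        totalMap (strictPart (seqSum n A D h k)) ∘ₗ .piMap h ∘ₗ totalMap (strictPart D) := by
  induction k with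
  | zero => exact totalMap_strictPart_seqSum_succ D h 0
  | succ k ih =>
    rw [totalMap_strictPart_seqSum_succ D h (k + 1)]
    conv_rhs => rw [totalMap_strictPart_seqSum_succ D h k]
    rw [ih]
    simp only [LinearMap.comp_add, LinearMap.add_comp, LinearMap.comp_assoc]

theorem strictPart_seqSum_succ_self :
    strictPart (seqSum n A D h (n + 1)) = strictPart (seqSum n A D h n) :=
  funext₃ fun _ ε' hlt =>
    seqSum_succ_eq_of_weight_le D h hlt.le (by have := weight_le ε'; omega)

theorem totalMap_dite_eq (u : ∀ ε, A ε →ₗ[ZMod 2] B ε)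
    (g : ∀ ε ε' : Fin n → Bool, ε ≤ ε' → (A ε →ₗ[ZMod 2] B ε')) :
    totalMap (fun ε ε' hle => if heq : ε = ε' then castL n B heq ∘ₗ u ε else g ε ε' hle) =
      .piMap u + totalMap (strictPart g) := by
  rw [totalMap_eq_diag_add_strictPart]
  congr 2
  · exact funext fun ε => dif_pos rfl
  · exact funext₃ fun ε ε' hlt => dif_neg hlt.ne

theorem totalMap_castL :
    totalMap (fun ε ε' (_ : ε ≤ ε') => if heq : ε = ε' then castL n A heq else 0) =
      LinearMap.id := by
  calc totalMap (fun ε ε' (_ : ε ≤ ε') => if heq : ε = ε' then castL n A heq else 0)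
      = .piMap (fun _ => LinearMap.id) + totalMap fun _ _ _ => 0 :=
        totalMap_dite_eq (fun _ => LinearMap.id) fun _ _ _ => 0
    _ = LinearMap.id := by rw [totalMap_zero, add_zero]; rfl

theorem totalMap_sandwich {E : (Fin n → Bool) → Type} [∀ ε, AddCommGroup (E ε)]
    [∀ ε, Module (ZMod 2) (E ε)] (u : ∀ ε, E ε →ₗ[ZMod 2] B ε) (v : ∀ ε, A ε →ₗ[ZMod 2] B ε)
    (S : ∀ ε ε' : Fin n → Bool, ε ≤ ε' → (A ε →ₗ[ZMod 2] A ε')) (w : ∀ ε, E ε →ₗ[ZMod 2] A ε) :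
    totalMap (fun ε ε' hle =>
        if heq : ε = ε' then castL n B heq ∘ₗ u ε else v ε' ∘ₗ S ε ε' hle ∘ₗ w ε) =
      .piMap u + .piMap v ∘ₗ totalMap (strictPart S) ∘ₗ .piMap w := by
  rw [totalMap_dite_eq u fun ε ε' hle => v ε' ∘ₗ S ε ε' hle ∘ₗ w ε, totalMap_comp_piMap,
    piMap_comp_totalMap]
  rfl

/-- The homotopy from the identity to `I ∘ Π`: `H_{ε,ε} = h_ε` and, for `ε < ε'`,
`H_{ε,ε'} = Σ h_{ε_j} D_{ε_{j−1},ε_j} ⋯ D_{ε₁,ε₂} h_{ε₁}`. -/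
noncomputable def Hmor (ε ε' : Fin n → Bool) (hle : ε ≤ ε') : A ε →ₗ[ZMod 2] A ε' :=
  if heq : ε = ε' then castL n A heq ∘ₗ h ε
  else h ε' ∘ₗ seqSum n A D h n ε ε' hle ∘ₗ h ε

variable {D h}

theorem diag_comp_diag_eq_zero (hD : totalMap D ∘ₗ totalMap D = 0) (ε : Fin n → Bool) :
    D ε ε le_rfl ∘ₗ D ε ε le_rfl = 0 := by
  rw [totalMap_comp, ← totalMap_zero] at hD
  have hsum := congr_fun₃ (totalMap_injective hD) ε ε le_rfl
  rwa [Finset.sum_eq_single ε (fun ε' _ hne => dif_neg fun hε' => hne (hε'.2.antisymm hε'.1))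
    (by simp), dif_pos ⟨le_rfl, le_rfl⟩] at hsum

theorem isSDR_totalMap {δ : ∀ ε, B ε →ₗ[ZMod 2] B ε} {inc : ∀ ε, B ε →ₗ[ZMod 2] A ε}
    {π : ∀ ε, A ε →ₗ[ZMod 2] B ε} (hD : totalMap D ∘ₗ totalMap D = 0)
    (hs : ∀ ε, IsSDR (D ε ε le_rfl) (δ ε) (inc ε) (π ε) (h ε)) :
    IsSDR (totalMap D) (totalMap (trans n A D h B δ π inc)) (totalMap (Imor n A D h B inc))
      (totalMap (Pmor n A D h B π)) (totalMap (Hmor D h)) := by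
  have hl := totalMap_strictPart_seqSum_succ D h n
  have hr := totalMap_strictPart_seqSum_succ' D h n
  rw [strictPart_seqSum_succ_self] at hl hr
  have htrans : totalMap (trans n A D h B δ π inc) = _ := totalMap_sandwich δ π _ inc
  have hI : totalMap (Imor n A D h B inc) = _ := totalMap_sandwich inc h _ inc
  have hP : totalMap (Pmor n A D h B π) = _ := totalMap_sandwich π π _ h
  have hH : totalMap (Hmor D h) = _ := totalMap_sandwich h h _ h
  rw [totalMap_eq_diag_add_strictPart D] at hD
  rw [totalMap_eq_diag_add_strictPart D, htrans, hI, hP, hH]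
  exact (IsSDR.pi hs).perturb hD hl hr

end Hypercube

/-- homological perturbation lemma for hypercubes, morphisms.
With `𝒵` the transferred hypercube, `I` is a morphism of hypercubes `𝒵 → 𝒞`, `Π` is a
morphism `𝒞 → 𝒵`, `Π∘I` is the identity morphism of `𝒵`, and `I∘Π` equals the identity
morphism of `𝒞` plus `∂_Mor(H)` for some collection `H`. -/
theorem statement_8
    (C : (Fin n → Bool) → Type) [∀ ε, AddCommGroup (C ε)] [∀ ε, Module (ZMod 2) (C ε)]
    (D : ∀ ε ε' : Fin n → Bool, ε ≤ ε' → (C ε →ₗ[ZMod 2] C ε'))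
    (hD : ∀ ε ε'' : Fin n → Bool, ε ≤ ε'' →
      (∑ ε' : Fin n → Bool,
        if h2 : ε ≤ ε' ∧ ε' ≤ ε'' then (D ε' ε'' h2.2) ∘ₗ (D ε ε' h2.1) else 0) = 0)
    (Z : (Fin n → Bool) → Type) [∀ ε, AddCommGroup (Z ε)] [∀ ε, Module (ZMod 2) (Z ε)]
    (δZ : ∀ ε, Z ε →ₗ[ZMod 2] Z ε) (hδZ : ∀ ε, δZ ε ∘ₗ δZ ε = 0)
    (π : ∀ ε, C ε →ₗ[ZMod 2] Z ε) (inc : ∀ ε, Z ε →ₗ[ZMod 2] C ε)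
    (hmt : ∀ ε, C ε →ₗ[ZMod 2] C ε)
    (hπchain : ∀ ε, δZ ε ∘ₗ π ε = π ε ∘ₗ D ε ε le_rfl)
    (hincchain : ∀ ε, D ε ε le_rfl ∘ₗ inc ε = inc ε ∘ₗ δZ ε)
    (hπinc : ∀ ε, π ε ∘ₗ inc ε = LinearMap.id)
    (hincπ : ∀ ε, inc ε ∘ₗ π ε =
      LinearMap.id + D ε ε le_rfl ∘ₗ hmt ε + hmt ε ∘ₗ D ε ε le_rfl)
    (hhh : ∀ ε, hmt ε ∘ₗ hmt ε = 0)
    (hπh : ∀ ε, π ε ∘ₗ hmt ε = 0)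
    (hhinc : ∀ ε, hmt ε ∘ₗ inc ε = 0) :
    -- (1) `I` is a morphism of hypercubes from `𝒵` to `𝒞`:
    (∀ ε ε'' : Fin n → Bool, ∀ _ : ε ≤ ε'',
      (∑ ε' : Fin n → Bool,
        if h2 : ε ≤ ε' ∧ ε' ≤ ε'' then
          (D ε' ε'' h2.2) ∘ₗ (Imor n C D hmt Z inc ε ε' h2.1) +
            (Imor n C D hmt Z inc ε' ε'' h2.2) ∘ₗ
              (trans n C D hmt Z δZ π inc ε ε' h2.1)
        else 0) = 0) ∧
    -- (2) `Π` is a morphism of hypercubes from `𝒞` to `𝒵`: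
    (∀ ε ε'' : Fin n → Bool, ∀ _ : ε ≤ ε'',
      (∑ ε' : Fin n → Bool,
        if h2 : ε ≤ ε' ∧ ε' ≤ ε'' then
          (trans n C D hmt Z δZ π inc ε' ε'' h2.2) ∘ₗ
            (Pmor n C D hmt Z π ε ε' h2.1) +
            (Pmor n C D hmt Z π ε' ε'' h2.2) ∘ₗ (D ε ε' h2.1)
        else 0) = 0) ∧
    -- (3) `Π ∘ I` is the identity morphism of `𝒵`:
    (∀ ε ε'' : Fin n → Bool, ∀ _ : ε ≤ ε'',
      (∑ ε' : Fin n → Bool,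
        if h2 : ε ≤ ε' ∧ ε' ≤ ε'' then
          (Pmor n C D hmt Z π ε' ε'' h2.2) ∘ₗ (Imor n C D hmt Z inc ε ε' h2.1)
        else 0) =
      (if heq : ε = ε'' then castL n Z heq else 0)) ∧
    -- (4) `I ∘ Π` is the identity morphism of `𝒞` plus `∂_Mor(H)`:
    (∃ H : ∀ ε ε' : Fin n → Bool, ε ≤ ε' → (C ε →ₗ[ZMod 2] C ε'),
      ∀ ε ε'' : Fin n → Bool, ∀ hle : ε ≤ ε'',
        (∑ ε' : Fin n → Bool,
          if h2 : ε ≤ ε' ∧ ε' ≤ ε'' then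
            (Imor n C D hmt Z inc ε' ε'' h2.2) ∘ₗ (Pmor n C D hmt Z π ε ε' h2.1)
          else 0) =
        (if heq : ε = ε'' then castL n C heq else 0) +
          (∑ ε' : Fin n → Bool,
            if h2 : ε ≤ ε' ∧ ε' ≤ ε'' then
              (D ε' ε'' h2.2) ∘ₗ (H ε ε' h2.1) + (H ε' ε'' h2.2) ∘ₗ (D ε ε' h2.1)
            else 0)) := by
  have hDD : totalMap D ∘ₗ totalMap D = 0 := by
    rw [totalMap_comp, ← totalMap_zero]
    congr! 4 with ε ε' hle
    exact hD ε ε' hle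
  have hs : ∀ ε, IsSDR (D ε ε le_rfl) (δZ ε) (inc ε) (π ε) (hmt ε) := fun ε =>
    ⟨diag_comp_diag_eq_zero hDD ε, hincchain ε, hπchain ε, hπinc ε, hincπ ε, hhh ε, hπh ε, hhinc ε⟩
  have htot := isSDR_totalMap hDD hs
  refine ⟨congr_fun₃ (totalMap_injective ?_), congr_fun₃ (totalMap_injective ?_),
    congr_fun₃ (totalMap_injective ?_), Hmor D hmt, congr_fun₃ (totalMap_injective ?_)⟩
  · rw [← totalMap_comp_add_comp, htot.d_comp_i, ZModModule.add_self, totalMap_zero]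
  · rw [← totalMap_comp_add_comp, htot.δ_comp_p, ZModModule.add_self, totalMap_zero]
  · rw [← totalMap_comp, htot.p_comp_i, totalMap_castL]
  · rw [← totalMap_comp, htot.i_comp_p, totalMap_add, totalMap_castL, ← totalMap_comp_add_comp,
      add_assoc]

end HypercubeHPL8
end

section
/- Let 𝒞 = (C_ε, D_{ε,ε′}) be an n-dimensional hypercube of chain complexes over 𝔽₂, and suppose given chain complexes (Z_ε, δ_ε) and maps π_ε : C_ε → Z_ε, i_ε : Z_ε → C_ε, h_ε : C_ε → C_ε such that π_ε and i_ε are chain maps and π_ε∘i_ε = id, i_ε∘π_ε = id + D_{ε,ε}∘h_ε + h_ε∘D_{ε,ε}, h_ε∘h_ε = 0, π_ε∘h_ε = 0, h_ε∘i_ε = 0. Suppose moreover that each C_ε carries a direct sum decomposition C_ε = ⊕_{k=1}^{m} F_ε^k (a filtration level) such that: (i) the image of i_ε lies in F_ε^1; (ii) π_ε vanishes on F_ε^k for all k ≥ 2; (iii) each h_ε maps F_ε^k into ⊕_{k′ ≥ k+1} F_ε^{k′}; (iv) for ε < ε′ with |ε′ − ε| = 1, D_{ε,ε′} maps F_ε^k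 into F_{ε′}^k; and (v) for ε < ε′ with |ε′ − ε| ≥ 2, D_{ε,ε′} maps F_ε^k into ⊕_{k′ ≥ k+1} F_{ε′}^{k′}. Then the transferred hypercube structure maps δ_{ε,ε′} = Σ π_{ε′} D_{ε_{j−1},ε_j} h_{ε_{j−1}} ⋯ h_{ε₂} D_{ε₁,ε₂} i_ε (summed over strictly increasing sequences ε = ε₁ < ⋯ < ε_j = ε′) satisfy δ_{ε,ε′} = π_{ε′} ∘ D_{ε,ε′} ∘ i_ε whenever |ε′ − ε| = 1, and δ_{ε,ε′} = 0 whenever |ε′ − ε| ≥ 2. -/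
open scoped Classical

namespace HypercubeHPL9

variable (n : ℕ)

/-- The number of coordinates where two cube points differ, `|ε′ − ε|`. -/
noncomputable def diffCard (ε ε' : Fin n → Bool) : ℕ :=
  (Finset.univ.filter fun i => ε i ≠ ε' i).card

/-- The sum, over all strictly increasing sequences `ε = ε₁ < ε₂ < ⋯ < ε_j = ε'`
(of length `j ≤ k + 2`), of `D_{ε_{j−1},ε_j} ∘ h_{ε_{j−1}} ∘ ⋯ ∘ h_{ε₂} ∘ D_{ε₁,ε₂}`.
Taking `k = n` gives the full sum over all strictly increasing sequences. -/
noncomputable def seqSum (C : (Fin n → Bool) → Type) [∀ ε, AddCommGroup (C ε)]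
    [∀ ε, Module (ZMod 2) (C ε)]
    (D : ∀ ε ε' : Fin n → Bool, ε ≤ ε' → (C ε →ₗ[ZMod 2] C ε'))
    (hmt : ∀ ε, C ε →ₗ[ZMod 2] C ε) :
    ℕ → ∀ ε ε' : Fin n → Bool, ε ≤ ε' → (C ε →ₗ[ZMod 2] C ε')
  | 0, ε, ε', hle => D ε ε' hle
  | (k + 1), ε, ε', hle => D ε ε' hle +
      ∑ ε'' : Fin n → Bool,
        if h2 : ε < ε'' ∧ ε'' < ε' then
          (D ε'' ε' h2.2.le) ∘ₗ (hmt ε'') ∘ₗ (seqSum C D hmt k ε ε'' h2.1.le)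
        else 0

/-!
Let `U_ε` be the sum of the levels `F_ε^k` with `k ≥ 2`. Each `h_ε` maps all of `C_ε` into `U_ε`,
because the levels span `C_ε`; each `D_{ε,ε'}` with `ε < ε'` maps `U_ε` into `U_ε'`; and `π_ε`
vanishes on `U_ε`. Hence `π_{ε'}` kills every summand containing some `h`, which leaves
`π_{ε'} ∘ D_{ε,ε'}`; if `|ε' - ε| ≥ 2`, then `D_{ε,ε'}` itself takes values in `U_ε'`.
-/

section Levels

/-- The supremum of the members of `F` with index strictly above `k`. For submodules `F_ε^k` this is
the target `⊕_{k' ≥ k+1} F_ε^{k'}` of a map that raises the filtration level. It is defined in any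
complete lattice, so directness of the sum is not part of it. -/
def levelsAbove {ι α : Type*} [LT ι] [CompleteLattice α] (F : ι → α) (k : ι) : α :=
  ⨆ (k' : ι) (_ : k < k'), F k'

section Lattice

variable {ι α : Type*} [CompleteLattice α]

lemma levelsAbove_le_iff [LT ι] {F : ι → α} {k : ι} {a : α} :
    levelsAbove F k ≤ a ↔ ∀ k', k < k' → F k' ≤ a :=
  iSup₂_le_iff

lemma le_levelsAbove [LT ι] (F : ι → α) {k k' : ι} (hk : k < k') : F k' ≤ levelsAbove F k :=
  levelsAbove_le_iff.1 le_rfl k' hk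

lemma levelsAbove_antitone [Preorder ι] (F : ι → α) : Antitone (levelsAbove F) :=
  fun _ _ hk => levelsAbove_le_iff.2 fun _ hk' => le_levelsAbove F (hk.trans_lt hk')

end Lattice

variable {R M N ι : Type*} [Semiring R] [AddCommMonoid M] [Module R M] [AddCommMonoid N]
  [Module R N]

/-- A linear map that preserves the filtration level: it sends `F k` into `G k` for every `k`. -/
def PreservesLevel (F : ι → Submodule R M) (G : ι → Submodule R N) (f : M →ₗ[R] N) : Prop :=
  ∀ k, ∀ x ∈ F k, f x ∈ G k

/-- A linear map that strictly raises the filtration level: it sends `F k` into the sum of the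
`G k'` with `k < k'`, for every `k`. -/
def RaisesLevel [LT ι] (F : ι → Submodule R M) (G : ι → Submodule R N) (f : M →ₗ[R] N) : Prop :=
  ∀ k, ∀ x ∈ F k, f x ∈ levelsAbove G k

variable [Preorder ι] {F : ι → Submodule R M} {G : ι → Submodule R N} {f : M →ₗ[R] N}

lemma PreservesLevel.levelsAbove_le_comap (hf : PreservesLevel F G f) (k : ι) :
    levelsAbove F k ≤ (levelsAbove G k).comap f :=
  levelsAbove_le_iff.2 fun k' hk x hx => le_levelsAbove G hk (hf k' x hx)

lemma RaisesLevel.levelsAbove_le_comap (hf : RaisesLevel F G f) (k : ι) :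
    levelsAbove F k ≤ (levelsAbove G k).comap f :=
  levelsAbove_le_iff.2 fun k' hk x hx => levelsAbove_antitone G hk.le (hf k' x hx)

lemma RaisesLevel.range_le_levelsAbove (hf : RaisesLevel F G f) (hF : ⨆ k, F k = ⊤) {k₀ : ι}
    (hk₀ : IsBot k₀) : LinearMap.range f ≤ levelsAbove G k₀ := by
  rw [LinearMap.range_le_iff_comap, eq_top_iff, ← hF]
  exact iSup_le fun k x hx => levelsAbove_antitone G (hk₀ k) (hf k x hx)

end Levels

section Hypercube

variable {n}

lemma diffCard_eq_hammingDist (ε ε' : Fin n → Bool) : diffCard n ε ε' = hammingDist ε ε' := by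
  simp only [diffCard, hammingDist]

lemma diffCard_pos {ε ε' : Fin n → Bool} : 0 < diffCard n ε ε' ↔ ε ≠ ε' := by
  rw [diffCard_eq_hammingDist, hammingDist_pos]

variable {C : (Fin n → Bool) → Type} [∀ ε, AddCommGroup (C ε)] [∀ ε, Module (ZMod 2) (C ε)]
  {D : ∀ ε ε' : Fin n → Bool, ε ≤ ε' → (C ε →ₗ[ZMod 2] C ε')}
  {hmt : ∀ ε, C ε →ₗ[ZMod 2] C ε}

lemma comp_seqSum_eq_comp {P : Type*} [AddCommGroup P] [Module (ZMod 2) P]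
    {ε ε' : Fin n → Bool} {p : C ε' →ₗ[ZMod 2] P}
    (hp : ∀ ε'' (h : ε'' < ε'), p ∘ₗ D ε'' ε' h.le ∘ₗ hmt ε'' = 0)
    (N : ℕ) (hle : ε ≤ ε') :
    p ∘ₗ seqSum n C D hmt N ε ε' hle = p ∘ₗ D ε ε' hle := by
  cases N with
  | zero => rw [seqSum]
  | succ N =>
    rw [seqSum, LinearMap.comp_add, add_eq_left, ← LinearMap.compRight_apply (ZMod 2),
      map_sum]
    refine Finset.sum_eq_zero fun ε'' _ => ?_
    split_ifs with h
    · exact congr($(hp ε'' h.2) ∘ₗ seqSum n C D hmt N ε ε'' h.1.le)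
    · exact LinearMap.comp_zero p

lemma levelsAbove_le_comap_of_lt {ι : Type*} [Preorder ι]
    {F : ∀ ε, ι → Submodule (ZMod 2) (C ε)} {ε ε' : Fin n → Bool} (hlt : ε < ε')
    (hD1 : diffCard n ε ε' = 1 → PreservesLevel (F ε) (F ε') (D ε ε' hlt.le))
    (hD2 : 2 ≤ diffCard n ε ε' → RaisesLevel (F ε) (F ε') (D ε ε' hlt.le)) (k : ι) :
    levelsAbove (F ε) k ≤ (levelsAbove (F ε') k).comap (D ε ε' hlt.le) := by
  have hpos : 1 ≤ diffCard n ε ε' := diffCard_pos.2 hlt.ne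
  rcases hpos.eq_or_lt with hone | htwo
  · exact (hD1 hone.symm).levelsAbove_le_comap k
  · exact (hD2 htwo).levelsAbove_le_comap k

end Hypercube

theorem statement_9_general
    {C : (Fin n → Bool) → Type} [∀ ε, AddCommGroup (C ε)] [∀ ε, Module (ZMod 2) (C ε)]
    {D : ∀ ε ε' : Fin n → Bool, ε ≤ ε' → (C ε →ₗ[ZMod 2] C ε')}
    {Z : (Fin n → Bool) → Type*} [∀ ε, AddCommGroup (Z ε)] [∀ ε, Module (ZMod 2) (Z ε)]
    {π : ∀ ε, C ε →ₗ[ZMod 2] Z ε} {hmt : ∀ ε, C ε →ₗ[ZMod 2] C ε}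
    {ι : Type*} [Preorder ι] {k₀ : ι} (hk₀ : IsBot k₀)
    {F : ∀ ε, ι → Submodule (ZMod 2) (C ε)} (hF : ∀ ε, ⨆ k, F ε k = ⊤)
    (hπ : ∀ ε k, k₀ < k → ∀ x ∈ F ε k, π ε x = 0)
    (hh : ∀ ε, RaisesLevel (F ε) (F ε) (hmt ε))
    (hD1 : ∀ ε ε' hle, diffCard n ε ε' = 1 → PreservesLevel (F ε) (F ε') (D ε ε' hle))
    (hD2 : ∀ ε ε' hle, 2 ≤ diffCard n ε ε' → RaisesLevel (F ε) (F ε') (D ε ε' hle)) :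
    (∀ ε ε' hle, π ε' ∘ₗ seqSum n C D hmt n ε ε' hle = π ε' ∘ₗ D ε ε' hle) ∧
    (∀ ε ε' hle, 2 ≤ diffCard n ε ε' → π ε' ∘ₗ seqSum n C D hmt n ε ε' hle = 0) := by
  have hker (ε) : levelsAbove (F ε) k₀ ≤ LinearMap.ker (π ε) :=
    levelsAbove_le_iff.2 (hπ ε)
  have hπDh (ε ε' : Fin n → Bool) (hlt : ε < ε') : π ε' ∘ₗ D ε ε' hlt.le ∘ₗ hmt ε = 0 := by
    ext x
    have hx : hmt ε x ∈ levelsAbove (F ε) k₀ :=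
      (hh ε).range_le_levelsAbove (hF ε) hk₀ (LinearMap.mem_range_self _ x)
    exact hker ε' (levelsAbove_le_comap_of_lt hlt (hD1 ε ε' _) (hD2 ε ε' _) k₀ hx)
  have hπδ (ε ε' : Fin n → Bool) (hle : ε ≤ ε') :
      π ε' ∘ₗ seqSum n C D hmt n ε ε' hle = π ε' ∘ₗ D ε ε' hle :=
    comp_seqSum_eq_comp (fun ε'' h => hπDh ε'' ε' h) n hle
  refine ⟨hπδ, fun ε ε' hle htwo => ?_⟩
  rw [hπδ, ← LinearMap.range_le_ker_iff]
  exact ((hD2 ε ε' hle htwo).range_le_levelsAbove (hF ε) hk₀).trans (hker ε')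

/-- filtered vanishing of the transferred structure maps.
Given a hypercube of chain complexes with vertex-wise strong deformation retraction data
and a compatible finite filtration `C_ε = ⊕_{k} F_ε^k` as in hypotheses (i)–(v), the
transferred structure maps `δ_{ε,ε'} = Σ π D h ⋯ h D i` satisfy
`δ_{ε,ε'} = π_{ε'} ∘ D_{ε,ε'} ∘ i_ε` when `|ε′−ε| = 1` and `δ_{ε,ε'} = 0` when
`|ε′−ε| ≥ 2`. -/
theorem statement_9
    (C : (Fin n → Bool) → Type) [∀ ε, AddCommGroup (C ε)] [∀ ε, Module (ZMod 2) (C ε)]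
    (D : ∀ ε ε' : Fin n → Bool, ε ≤ ε' → (C ε →ₗ[ZMod 2] C ε'))
    (hD : ∀ ε ε'' : Fin n → Bool, ε ≤ ε'' →
      (∑ ε' : Fin n → Bool,
        if h2 : ε ≤ ε' ∧ ε' ≤ ε'' then (D ε' ε'' h2.2) ∘ₗ (D ε ε' h2.1) else 0) = 0)
    (Z : (Fin n → Bool) → Type) [∀ ε, AddCommGroup (Z ε)] [∀ ε, Module (ZMod 2) (Z ε)]
    (δZ : ∀ ε, Z ε →ₗ[ZMod 2] Z ε) (hδZ : ∀ ε, δZ ε ∘ₗ δZ ε = 0)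
    (π : ∀ ε, C ε →ₗ[ZMod 2] Z ε) (inc : ∀ ε, Z ε →ₗ[ZMod 2] C ε)
    (hmt : ∀ ε, C ε →ₗ[ZMod 2] C ε)
    (hπchain : ∀ ε, δZ ε ∘ₗ π ε = π ε ∘ₗ D ε ε le_rfl)
    (hincchain : ∀ ε, D ε ε le_rfl ∘ₗ inc ε = inc ε ∘ₗ δZ ε)
    (hπinc : ∀ ε, π ε ∘ₗ inc ε = LinearMap.id)
    (hincπ : ∀ ε, inc ε ∘ₗ π ε =
      LinearMap.id + D ε ε le_rfl ∘ₗ hmt ε + hmt ε ∘ₗ D ε ε le_rfl)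
    (hhh : ∀ ε, hmt ε ∘ₗ hmt ε = 0)
    (hπh : ∀ ε, π ε ∘ₗ hmt ε = 0)
    (hhinc : ∀ ε, hmt ε ∘ₗ inc ε = 0)
    -- the filtration `C_ε = ⊕_{k=1}^m F_ε^k`:
    (m : ℕ) (hm : 0 < m)
    (F : ∀ ε : Fin n → Bool, Fin m → Submodule (ZMod 2) (C ε))
    (hinternal : ∀ ε, DirectSum.IsInternal (F ε))
    -- (i) the image of `i_ε` lies in the lowest filtration level `F_ε^1`:
    (hi1 : ∀ ε, LinearMap.range (inc ε) ≤ F ε ⟨0, hm⟩)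
    -- (ii) `π_ε` vanishes on `F_ε^k` for `k ≥ 2`:
    (hπ2 : ∀ ε (k : Fin m), k ≠ ⟨0, hm⟩ → ∀ x ∈ F ε k, π ε x = 0)
    -- (iii) `h_ε` strictly raises the filtration level:
    (hh2 : ∀ ε (k : Fin m), ∀ x ∈ F ε k,
      hmt ε x ∈ ⨆ (k' : Fin m) (_ : k < k'), F ε k')
    -- (iv) length-one structure maps preserve the filtration level:
    (hD1 : ∀ ε ε' : Fin n → Bool, ∀ hle : ε ≤ ε', diffCard n ε ε' = 1 →
      ∀ (k : Fin m), ∀ x ∈ F ε k, D ε ε' hle x ∈ F ε' k)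
    -- (v) longer structure maps strictly raise the filtration level:
    (hD2 : ∀ ε ε' : Fin n → Bool, ∀ hle : ε ≤ ε', 2 ≤ diffCard n ε ε' →
      ∀ (k : Fin m), ∀ x ∈ F ε k,
        D ε ε' hle x ∈ ⨆ (k' : Fin m) (_ : k < k'), F ε' k') :
    (∀ ε ε' : Fin n → Bool, ∀ hle : ε ≤ ε', diffCard n ε ε' = 1 →
      (π ε') ∘ₗ (seqSum n C D hmt n ε ε' hle) ∘ₗ (inc ε) =
        (π ε') ∘ₗ (D ε ε' hle) ∘ₗ (inc ε)) ∧
    (∀ ε ε' : Fin n → Bool, ∀ hle : ε ≤ ε', 2 ≤ diffCard n ε ε' →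
      (π ε') ∘ₗ (seqSum n C D hmt n ε ε' hle) ∘ₗ (inc ε) = 0) := by
  have hbot : IsBot (⟨0, hm⟩ : Fin m) := fun k => Nat.zero_le k
  obtain ⟨hπδ, hπδ_zero⟩ := statement_9_general n hbot
    (fun ε => (hinternal ε).submodule_iSup_eq_top) (fun ε k hk => hπ2 ε k hk.ne') hh2 hD1 hD2
  exact ⟨fun ε ε' hle _ => congr($(hπδ ε ε' hle) ∘ₗ inc ε),
    fun ε ε' hle htwo => congr($(hπδ_zero ε ε' hle htwo) ∘ₗ inc ε)⟩

end HypercubeHPL9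
end
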